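/- Let A be a free abelian group of finite rank and T a finitely generated abelian group. Then there exist a metabelian group H with a finite presentation whose Dehn function satisfies δ_H(n) ≈ 2ⁿ, and an injective group homomorphism from the restricted wreath product A ≀ T into H. In particular, every free metabelian group of finite rank is a subgroup of a finitely presented metabelian group whose Dehn function is equivalent to 2ⁿ. -/

import Mathlib

open Function

/-- The length of the reduced word representing an element of a free group. -/
noncomputable def freeNorm {X : Type*} (w : FreeGroup X) : ℕ :=
  letI := Classical.decEq X
  w.toWord.length

/-- `w` equals a product of exactly `N` conjugates of elements of `R ∪ R⁻¹`. -/
def AreaIs {G : Type*} [Group G] (R : Set G) (w : G) (N : ℕ) : Prop :=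
  ∃ r f : Fin N → G, (∀ i, r i ∈ R ∨ (r i)⁻¹ ∈ R) ∧
    w = (List.ofFn fun i => (f i)⁻¹ * r i * f i).prod

/-- The area of `w` with respect to the relators `R` is at most `N`. -/
def AreaLe {G : Type*} [Group G] (R : Set G) (w : G) (N : ℕ) : Prop :=
  ∃ N' ≤ N, AreaIs R w N'

/-- `f ≼ g` : there is `C > 0` with `f n ≤ C * g (C * n) + C * n + C` for all `n`. -/
def Dominates (f g : ℕ → ℕ) : Prop :=
  ∃ C : ℕ, 0 < C ∧ ∀ n, f n ≤ C * g (C * n) + C * n + C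

/-- `f ≈ g` : mutual domination. -/
def DehnEquiv (f g : ℕ → ℕ) : Prop := Dominates f g ∧ Dominates g f

/-- `δ` is the Dehn function of the presentation with relator set `R`. -/
def IsDehnFunctionOf {X : Type*} (R : Set (FreeGroup X)) (δ : ℕ → ℕ) : Prop :=
  ∀ n, IsLeast {N | ∀ w ∈ Subgroup.normalClosure R, freeNorm w ≤ n → AreaLe R w N} (δ n)

/-- A group is metabelian if its derived subgroup is abelian. -/
def IsMetabelian (G : Type*) [Group G] : Prop :=
  ∀ a b : G, a ∈ commutator G → b ∈ commutator G → a * b = b * a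

instance derivedSeriesNormalInst {G : Type*} [Group G] (n : ℕ) : (derivedSeries G n).Normal :=
  derivedSeries_normal G n

/-- The free metabelian group on `X`: the free group modulo its second derived subgroup. -/
abbrev FreeMetabelian (X : Type*) := FreeGroup X ⧸ derivedSeries (FreeGroup X) 2

/-- The word length of `w` in the free metabelian group is at most `n`. -/
def mNormLe {X : Type*} (w : FreeMetabelian X) (n : ℕ) : Prop :=
  ∃ v : FreeGroup X, QuotientGroup.mk' (derivedSeries (FreeGroup X) 2) v = w ∧ freeNorm v ≤ n

/-- `δ` is the relative Dehn function (in the variety of metabelian groups) of the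
relative presentation with relator set `R`. -/
def IsRelDehnFunctionOf {X : Type*} (R : Set (FreeMetabelian X)) (δ : ℕ → ℕ) : Prop :=
  ∀ n, IsLeast {N | ∀ w ∈ Subgroup.normalClosure R, mNormLe w n → AreaLe R w N} (δ n)

/-- The paper's commutator convention: `[x, y] = x⁻¹ * y⁻¹ * x * y`. -/
def pcomm {G : Type*} [Group G] (x y : G) : G := x⁻¹ * y⁻¹ * x * y

/-- A group has torsion-free rank `k` if it has a finite-index subgroup isomorphic to `ℤ^k`. -/
def HasTFRank (Q : Type*) [Group Q] (k : ℕ) : Prop :=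
  ∃ H : Subgroup Q, H.index ≠ 0 ∧ Nonempty (H ≃* Multiplicative (Fin k → ℤ))

/-- `G ⧸ A` is abelian and has torsion-free rank `j`. -/
def QuotientRankProp {G : Type*} [Group G] (A : Subgroup G) [A.Normal] (j : ℕ) : Prop :=
  (∀ x y : G ⧸ A, x * y = y * x) ∧ HasTFRank (G ⧸ A) j

/-- The set of torsion-free ranks of quotients `G ⧸ A` by abelian normal subgroups `A`
with `G ⧸ A` abelian. -/
def abelianRankSet (G : Type*) [Group G] : Set ℕ :=
  {j | ∃ A : Subgroup G, ∃ h : A.Normal, (∀ x y : G, x ∈ A → y ∈ A → x * y = y * x) ∧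
    @QuotientRankProp G _ A h j}
/-- The shift automorphism of `⊕_{s ∈ T} A` induced by `t ∈ T` : `(t·φ)(s) = φ(t⁻¹s)`. -/
noncomputable def wreathShift {T : Type*} [CommGroup T] {A : Type*} [AddCommGroup A]
    (t : T) : (T →₀ A) ≃+ (T →₀ A) :=
  Finsupp.domCongr (Equiv.mulLeft t)

/-- The permutation action of `T` on `⊕_{s ∈ T} A` as a homomorphism
`T →* MulAut (Multiplicative (T →₀ A))`. -/
noncomputable def wreathAction (A T : Type*) [AddCommGroup A] [CommGroup T] :
    T →* MulAut (Multiplicative (T →₀ A)) :=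
  MonoidHom.mk' (fun t => AddEquiv.toMultiplicative (wreathShift t)) (by
    intro s t
    refine MulEquiv.ext fun x => ?_
    show Multiplicative.ofAdd (wreathShift (s * t) (Multiplicative.toAdd x))
      = Multiplicative.ofAdd (wreathShift s (wreathShift t (Multiplicative.toAdd x)))
    congr 1
    ext y
    simp only [wreathShift, Finsupp.domCongr_apply, Finsupp.equivMapDomain_apply,
      Equiv.mulLeft_symm, Equiv.coe_mulLeft]
    rw [mul_inv_rev, mul_assoc])

/-- The restricted wreath product `A ≀ T = (⊕_{t ∈ T} A) ⋊ T`. -/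
noncomputable abbrev WreathProduct (A T : Type*) [AddCommGroup A] [CommGroup T] :=
  SemidirectProduct (Multiplicative (T →₀ A)) T (wreathAction A T)

section AreaCalculus

variable {G : Type*} [Group G] {R : Set G}

theorem AreaLe.one' : AreaLe R (1 : G) 0 :=
  ⟨0, le_rfl, Fin.elim0, Fin.elim0, fun i => i.elim0, by simp⟩

theorem AreaLe.mono {w : G} {N M : ℕ} (h : AreaLe R w N) (hNM : N ≤ M) : AreaLe R w M := by
  obtain ⟨N', h1, h2⟩ := h
  exact ⟨N', h1.trans hNM, h2⟩

theorem AreaLe.mul {w v : G} {N M : ℕ} (h : AreaLe R w N) (h' : AreaLe R v M) :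
    AreaLe R (w * v) (N + M) := by
  obtain ⟨N', h1, r, f, hr, rfl⟩ := h
  obtain ⟨M', h1', r', f', hr', rfl⟩ := h'
  refine ⟨N' + M', by omega, Fin.append r r', Fin.append f f', ?_, ?_⟩
  · intro i
    refine Fin.addCases (fun i => ?_) (fun i => ?_) i
    · simpa using hr i
    · simpa using hr' i
  · rw [← List.prod_append, ← List.ofFn_fin_append]
    congr 2
    funext i
    refine Fin.addCases (fun i => ?_) (fun i => ?_) i <;> simp

theorem AreaLe.of_conj {x r : G} (h : r ∈ R ∨ r⁻¹ ∈ R) : AreaLe R (x * r * x⁻¹) 1 :=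
  ⟨1, le_rfl, fun _ => r, fun _ => x⁻¹, fun _ => h, by simp⟩

theorem AreaLe.induct {P : G → ℕ → Prop} (h1 : P 1 0)
    (hm : ∀ x r w N, (r ∈ R ∨ r⁻¹ ∈ R) → P w N → P (x⁻¹ * r * x * w) (N + 1)) {w : G} {N : ℕ}
    (h : AreaLe R w N) : ∃ N' ≤ N, P w N' := by
  obtain ⟨N', h0, r, f, hr, rfl⟩ := h
  refine ⟨N', h0, ?_⟩
  clear h0
  induction N' with
  | zero => simpa using h1
  | succ n ih =>
    rw [List.ofFn_succ, List.prod_cons]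
    exact hm _ _ _ _ (hr 0) (ih (fun i => r i.succ) (fun i => f i.succ) (fun i => hr i.succ))

theorem AreaLe.conj {w : G} {N : ℕ} (h : AreaLe R w N) (x : G) : AreaLe R (x * w * x⁻¹) N := by
  obtain ⟨N', h1, h2⟩ := AreaLe.induct (P := fun w N => AreaLe R (x * w * x⁻¹) N)
    (by simpa using AreaLe.one') (by
      intro y r w N hr h
      have := (AreaLe.of_conj (x := x * y⁻¹) hr).mul h
      rw [add_comm] at this
      convert this using 1
      group) h
  exact h2.mono h1

theorem AreaLe.inv {w : G} {N : ℕ} (h : AreaLe R w N) : AreaLe R w⁻¹ N := by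
  obtain ⟨N', h1, h2⟩ := AreaLe.induct (P := fun w N => AreaLe R w⁻¹ N)
    (by simpa using AreaLe.one') (by
      intro y r w N hr h
      have := h.mul (AreaLe.of_conj (x := y⁻¹) (r := r⁻¹) (R := R) (by
        rw [inv_inv]; exact hr.symm))
      convert this using 1
      group) h
  exact h2.mono h1

theorem AreaLe.of_mem {r : G} (h : r ∈ R) : AreaLe R r 1 := by
  simpa using AreaLe.of_conj (x := 1) (Or.inl h)

theorem AreaLe.map_eq_one {K : Type*} [Group K] (φ : G →* K) (hφ : ∀ r ∈ R, φ r = 1) {w : G}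
    {N : ℕ} (h : AreaLe R w N) : φ w = 1 := by
  obtain ⟨N', h1, h2⟩ := AreaLe.induct (P := fun w _ => φ w = 1) (by simp) (by
      intro y r w N hr h
      have : φ r = 1 := by
        rcases hr with hr | hr
        · exact hφ _ hr
        · have := hφ _ hr
          simpa using this
      simp [this, h]) h
  exact h2

theorem AreaLe.mem_normalClosure {w : G} {N : ℕ} (h : AreaLe R w N) :
    w ∈ Subgroup.normalClosure R := by
  have := AreaLe.map_eq_one (QuotientGroup.mk' (Subgroup.normalClosure R)) (by
    intro r hr
    exact (QuotientGroup.eq_one_iff r).2 (Subgroup.subset_normalClosure hr)) h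
  exact (QuotientGroup.eq_one_iff w).1 this

/-- The bi-invariant area pseudo-distance between `g` and `h` is at most `N`. -/
def Dst (R : Set G) (g h : G) (N : ℕ) : Prop := AreaLe R (g * h⁻¹) N

theorem Dst.refl (g : G) : Dst R g g 0 := by
  unfold Dst; simpa using AreaLe.one'

theorem Dst.of_eq {g h : G} (e : g = h) : Dst R g h 0 := e ▸ Dst.refl g

theorem Dst.mono {g h : G} {N M : ℕ} (H : Dst R g h N) (hNM : N ≤ M) : Dst R g h M :=
  AreaLe.mono H hNM

theorem Dst.symm {g h : G} {N : ℕ} (H : Dst R g h N) : Dst R h g N := by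
  have := AreaLe.inv H
  unfold Dst; simpa using this

theorem Dst.trans {g h k : G} {N M : ℕ} (H : Dst R g h N) (H' : Dst R h k M) :
    Dst R g k (N + M) := by
  have := AreaLe.mul H H'
  unfold Dst; convert this using 1; group

theorem Dst.mul_left {g h : G} {N : ℕ} (x : G) (H : Dst R g h N) : Dst R (x * g) (x * h) N := by
  have := AreaLe.conj H x
  unfold Dst; convert this using 1; group

theorem Dst.mul_right {g h : G} {N : ℕ} (H : Dst R g h N) (x : G) : Dst R (g * x) (h * x) N := by
  unfold Dst at *; convert H using 1; group

theorem Dst.mul {g h g' h' : G} {N M : ℕ} (H : Dst R g h N) (H' : Dst R g' h' M) :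
    Dst R (g * g') (h * h') (N + M) :=
  (H.mul_right g').trans (H'.mul_left h)

theorem Dst.inv {g h : G} {N : ℕ} (H : Dst R g h N) : Dst R g⁻¹ h⁻¹ N := by
  have := (H.mul_left g⁻¹).mul_right h⁻¹
  refine Dst.symm ?_
  convert this using 1 <;> group

theorem Dst.conj {g h : G} {N : ℕ} (x : G) (H : Dst R g h N) :
    Dst R (x * g * x⁻¹) (x * h * x⁻¹) N :=
  (H.mul_left x).mul_right _

theorem Dst.conjBy {x y : G} {N : ℕ} (H : Dst R x y N) (g : G) :
    Dst R (x * g * x⁻¹) (y * g * y⁻¹) (2 * N) := by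
  have := (H.mul_right g).mul H.inv
  rwa [← two_mul] at this

theorem Dst.of_mem {g h : G} (H : g * h⁻¹ ∈ R) : Dst R g h 1 := AreaLe.of_mem H

theorem Dst.map_eq {K : Type*} [Group K] (φ : G →* K) (hφ : ∀ r ∈ R, φ r = 1) {g h : G}
    {N : ℕ} (H : Dst R g h N) : φ g = φ h := by
  have := AreaLe.map_eq_one φ hφ H
  rwa [map_mul, map_inv, mul_inv_eq_one] at this

theorem Dst.pow {g h : G} {N : ℕ} (H : Dst R g h N) (n : ℕ) : Dst R (g ^ n) (h ^ n) (n * N) := by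
  induction n with
  | zero => simpa using Dst.refl (1 : G)
  | succ n ih =>
    rw [pow_succ, pow_succ, add_mul, one_mul]
    exact ih.mul H

theorem Dst.zpow {g h : G} {N : ℕ} (H : Dst R g h N) (n : ℤ) :
    Dst R (g ^ n) (h ^ n) (n.natAbs * N) := by
  obtain ⟨m, rfl | rfl⟩ := n.eq_nat_or_neg
  · simpa using H.pow m
  · simpa using (H.pow m).inv

/-- The cost of commuting `g` past `h` is at most `N`. -/
def Cm (R : Set G) (g h : G) (N : ℕ) : Prop := Dst R (g * h) (h * g) N

theorem Cm.mono {g h : G} {N M : ℕ} (H : Cm R g h N) (hNM : N ≤ M) : Cm R g h M :=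
  AreaLe.mono H hNM

theorem Cm.symm {g h : G} {N : ℕ} (H : Cm R g h N) : Cm R h g N := Dst.symm H

theorem Cm.one_right (g : G) : Cm R g 1 0 := by
  unfold Cm; simpa using Dst.refl g

theorem Cm.mul_right {g h h' : G} {N M : ℕ} (H : Cm R g h N) (H' : Cm R g h' M) :
    Cm R g (h * h') (N + M) := by
  have h1 := Dst.mul_right H h'
  have h2 := Dst.mul_left h H'
  have := h1.trans (by simpa [mul_assoc] using h2)
  unfold Cm; simpa [mul_assoc] using this

theorem Cm.inv_right {g h : G} {N : ℕ} (H : Cm R g h N) : Cm R g h⁻¹ N := by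
  have h1 := Dst.symm ((Dst.mul_left h⁻¹ H).mul_right h⁻¹)
  unfold Cm; convert h1 using 1 <;> group

theorem Cm.mul_left {g g' h : G} {N M : ℕ} (H : Cm R g h N) (H' : Cm R g' h M) :
    Cm R (g * g') h (N + M) := (H.symm.mul_right H'.symm).symm

theorem Cm.inv_left {g h : G} {N : ℕ} (H : Cm R g h N) : Cm R g⁻¹ h N := H.symm.inv_right.symm

theorem Cm.pow_right {g h : G} {N : ℕ} (H : Cm R g h N) (n : ℕ) : Cm R g (h ^ n) (n * N) := by
  induction n with
  | zero => simpa using Cm.one_right g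
  | succ n ih =>
    rw [pow_succ, add_mul, one_mul]
    exact ih.mul_right H

theorem Cm.zpow_right {g h : G} {N : ℕ} (H : Cm R g h N) (n : ℤ) :
    Cm R g (h ^ n) (n.natAbs * N) := by
  obtain ⟨m, rfl | rfl⟩ := n.eq_nat_or_neg
  · simpa using H.pow_right m
  · simpa using (H.pow_right m).inv_right

theorem Cm.zpow_left {g h : G} {N : ℕ} (H : Cm R g h N) (n : ℤ) :
    Cm R (g ^ n) h (n.natAbs * N) := (H.symm.zpow_right n).symm

theorem Cm.conj {g h : G} {N : ℕ} (x : G) (H : Cm R g h N) :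
    Cm R (x * g * x⁻¹) (x * h * x⁻¹) N := by
  have := Dst.conj x H
  unfold Cm; convert this using 1 <;> group

theorem Cm.congr {g g' h h' : G} {N A B : ℕ} (H : Cm R g h N) (hg : Dst R g g' A)
    (hh : Dst R h h' B) : Cm R g' h' (N + 2 * A + 2 * B) := by
  have := ((hg.mul hh).symm.trans H).trans (hh.mul hg)
  exact Dst.mono this (by omega)

/-- The basic step of Baumslag's argument. -/
theorem Cm.step {x₁ x₀ x₂ y₁ y₀ y₂ : G} {K M : ℕ}
    (hXY : Cm R (x₁ * x₀⁻¹ ^ 3 * x₂) (y₁ * y₀⁻¹ ^ 3 * y₂) M)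
    (h11 : Cm R x₁ y₁ K) (h10 : Cm R x₁ y₀ K) (h12 : Cm R x₁ y₂ K)
    (h01 : Cm R x₀ y₁ K) (h00 : Cm R x₀ y₀ K) (h02 : Cm R x₀ y₂ K)
    (h20 : Cm R x₂ y₀ K) (h22 : Cm R x₂ y₂ K) :
    Cm R x₂ y₁ (24 * K + M) := by
  set Y := y₁ * y₀⁻¹ ^ 3 * y₂ with hY
  set X := x₁ * x₀⁻¹ ^ 3 * x₂ with hX
  have a1 : Cm R x₁ Y (K + 3 * K + K) := (h11.mul_right (h10.inv_right.pow_right 3)).mul_right h12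
  have a0 : Cm R x₀ Y (K + 3 * K + K) := (h01.mul_right (h00.inv_right.pow_right 3)).mul_right h02
  have b : Cm R (x₁ * x₀⁻¹ ^ 3) Y (K + 3 * K + K + 3 * (K + 3 * K + K)) :=
    a1.mul_left (a0.inv_left.symm.pow_right 3).symm
  have c : Cm R x₂ Y (K + 3 * K + K + 3 * (K + 3 * K + K) + M) := by
    have := b.inv_left.mul_left hXY
    convert this using 1
    rw [hX]; group
  have d : Cm R x₂ (y₀⁻¹ ^ 3 * y₂) (3 * K + K) := (h20.inv_right.pow_right 3).mul_right h22
  have e := c.mul_right d.inv_right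
  have : y₁ = Y * (y₀⁻¹ ^ 3 * y₂)⁻¹ := by rw [hY]; group
  rw [this]
  exact e.mono (by omega)

end AreaCalculus

section NormalForms

variable {G : Type*} [Group G] {R : Set G} {Y : Type*}

/-- Ordered product of powers along a list. -/
def nfl (g : Y → G) (l : List Y) (e : Y → ℤ) : G := (l.map fun y => g y ^ e y).prod

/-- The `ℓ¹` norm along a list. -/
def nrml (l : List Y) (e : Y → ℤ) : ℕ := (l.map fun y => (e y).natAbs).sum

theorem nfl_cm {g : Y → G} (hq : ∀ x y, Cm R (g x) (g y) 1) (x : Y) (b : ℤ) (l : List Y)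
    (e : Y → ℤ) : Cm R (g x ^ b) (nfl g l e) (b.natAbs * nrml l e) := by
  induction l with
  | nil => simpa [nfl, nrml] using Cm.one_right (R := R) (g x ^ b)
  | cons y l ih =>
    have h1 : Cm R (g x ^ b) (g y ^ e y) ((e y).natAbs * (b.natAbs * 1)) :=
      ((hq x y).zpow_left b).zpow_right (e y)
    have h2 := h1.mul_right ih
    simp only [nfl, nrml, List.map_cons, List.prod_cons, List.sum_cons] at h2 ⊢
    exact h2.mono (le_of_eq (by ring))

theorem nfl_mul {g : Y → G} (hq : ∀ x y, Cm R (g x) (g y) 1) (l : List Y) (e f : Y → ℤ) :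
    Dst R (nfl g l e * nfl g l f) (nfl g l (e + f)) (nrml l e * nrml l f) := by
  induction l with
  | nil => simpa [nfl, nrml] using Dst.refl (R := R) (1 : G)
  | cons y l ih =>
    have h1 := (nfl_cm hq y (f y) l e).symm
    have h2 : Dst R (g y ^ e y * (nfl g l e * g y ^ f y) * nfl g l f)
      (g y ^ e y * (g y ^ f y * nfl g l e) * nfl g l f) _ := (Dst.mul_left _ h1).mul_right _
    have h3 := h2.trans (Dst.trans (Dst.of_eq (by
      show _ = g y ^ (e y + f y) * (nfl g l e * nfl g l f)
      rw [zpow_add]; group)) (ih.mul_left _))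
    have h4 : nfl g (y :: l) e * nfl g (y :: l) f =
        g y ^ e y * (nfl g l e * g y ^ f y) * nfl g l f := by
      simp [nfl, mul_assoc]
    have h5 : nfl g (y :: l) (e + f) = g y ^ (e y + f y) * nfl g l (e + f) := by
      simp [nfl]
    rw [h4, h5]
    refine h3.mono ?_
    simp only [nrml, List.map_cons, List.sum_cons]
    nlinarith [Nat.zero_le ((e y).natAbs * (f y).natAbs),
      Nat.zero_le ((e y).natAbs * (List.map (fun y => (f y).natAbs) l).sum)]

theorem nfl_zero (g : Y → G) (l : List Y) : nfl g l 0 = 1 := by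
  simp [nfl]

theorem nfl_single [DecidableEq Y] (g : Y → G) (l : List Y) (hl : l.Nodup) (y : Y) (hy : y ∈ l)
    (c : ℤ) : nfl g l (Pi.single y c) = g y ^ c := by
  have aux : ∀ l : List Y, y ∉ l → nfl g l (Pi.single y c) = 1 := by
    intro l hl
    apply List.prod_eq_one
    intro x hx
    rw [List.mem_map] at hx
    obtain ⟨z, hz, rfl⟩ := hx
    have : z ≠ y := fun h => hl (h ▸ hz)
    simp [this]
  induction l with
  | nil => simp at hy
  | cons x l ih =>
    have h5 : nfl g (x :: l) (Pi.single y c) =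
      g x ^ ((Pi.single y c : Y → ℤ) x) * nfl g l (Pi.single y c) := by
      simp [nfl]
    rw [h5]
    rw [List.nodup_cons] at hl
    by_cases hxy : x = y
    · subst hxy
      rw [aux l hl.1]; simp
    · have : y ∈ l := by
        rcases List.mem_cons.1 hy with h | h
        · exact absurd h.symm hxy
        · exact h
      rw [ih hl.2 this, Pi.single_apply]
      simp [hxy]

theorem nfl_congr_dst {g : Y → G} (l : List Y) (e f : Y → ℤ)
    (h : ∀ y, Dst R (g y ^ e y) (g y ^ f y) (e y - f y).natAbs) :
    Dst R (nfl g l e) (nfl g l f) (nrml l (e - f)) := by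
  induction l with
  | nil => simpa [nfl, nrml] using Dst.refl (R := R) (1 : G)
  | cons y l ih =>
    simpa [nfl, nrml] using (h y).mul ih

variable [Fintype Y]

/-- Normal form word of an exponent vector. -/
noncomputable def nf (g : Y → G) (e : Y → ℤ) : G := nfl g Finset.univ.toList e

/-- The `ℓ¹` norm of an exponent vector. -/
noncomputable def nrm (e : Y → ℤ) : ℕ := ∑ y, (e y).natAbs

theorem nrml_eq (e : Y → ℤ) : nrml Finset.univ.toList e = nrm e := by
  simp [nrml, nrm, Finset.sum_map_toList]

theorem nf_mul {g : Y → G} (hq : ∀ x y, Cm R (g x) (g y) 1) (e f : Y → ℤ) :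
    Dst R (nf g e * nf g f) (nf g (e + f)) (nrm e * nrm f) := by
  have := nfl_mul hq Finset.univ.toList e f
  rwa [nrml_eq, nrml_eq] at this

theorem nf_zero (g : Y → G) : nf g 0 = 1 := nfl_zero g _

theorem nf_single [DecidableEq Y] (g : Y → G) (y : Y) (c : ℤ) :
    nf g (Pi.single y c) = g y ^ c :=
  nfl_single g _ (Finset.nodup_toList _) y (by simp) c

theorem nf_congr_dst {g : Y → G} (e f : Y → ℤ)
    (h : ∀ y, Dst R (g y ^ e y) (g y ^ f y) (e y - f y).natAbs) :
    Dst R (nf g e) (nf g f) (nrm (e - f)) := by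
  have := nfl_congr_dst Finset.univ.toList e f h
  rwa [nrml_eq] at this

theorem nf_map {K : Type*} [Group K] (φ : G →* K) (g : Y → G) (e : Y → ℤ) :
    φ (nf g e) = nf (fun y => φ (g y)) e := by
  simp [nf, nfl, map_list_prod, Function.comp_def]

theorem nf_comm {K : Type*} [CommGroup K] (g : Y → K) (e : Y → ℤ) :
    nf g e = ∏ y, g y ^ e y := by
  simp [nf, nfl, Finset.prod_map_toList]

theorem nrm_add_le (e f : Y → ℤ) : nrm (e + f) ≤ nrm e + nrm f := by
  unfold nrm
  rw [← Finset.sum_add_distrib]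
  exact Finset.sum_le_sum fun y _ => Int.natAbs_add_le _ _

theorem nrm_neg (e : Y → ℤ) : nrm (-e) = nrm e := by simp [nrm]

theorem nrm_sub_le (e f : Y → ℤ) : nrm (e - f) ≤ nrm e + nrm f := by
  rw [sub_eq_add_neg, ← nrm_neg f]; exact nrm_add_le _ _

theorem nrm_zero : nrm (0 : Y → ℤ) = 0 := by simp [nrm]

theorem nrm_single [DecidableEq Y] (y : Y) (c : ℤ) : nrm (Pi.single y c : Y → ℤ) = c.natAbs := by
  unfold nrm
  rw [Finset.sum_eq_single y]
  · simp
  · intro x _ hx; simp [hx]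
  · simp

/-- How the norm changes when one coordinate is changed. -/
theorem nrm_update [DecidableEq Y] (e : Y → ℤ) (y : Y) (c : ℤ) :
    nrm (e + Pi.single y c) + (e y).natAbs = nrm e + (e y + c).natAbs := by
  unfold nrm
  rw [← Finset.add_sum_erase _ _ (Finset.mem_univ y),
    ← Finset.add_sum_erase _ (fun y => (e y).natAbs) (Finset.mem_univ y)]
  have : ∑ x ∈ Finset.univ.erase y, ((e + Pi.single y c : Y → ℤ) x).natAbs =
      ∑ x ∈ Finset.univ.erase y, (e x).natAbs := by
    refine Finset.sum_congr rfl fun x hx => ?_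
    simp [Finset.ne_of_mem_erase hx]
  rw [this]
  simp
  omega

theorem le_nrm (e : Y → ℤ) (y : Y) : (e y).natAbs ≤ nrm e :=
  Finset.single_le_sum (f := fun y => (e y).natAbs) (fun _ _ => Nat.zero_le _) (Finset.mem_univ y)

end NormalForms

section Cancellation

variable {G : Type*} [Group G] {R : Set G}

theorem cm_list {α : Type*} (f : α → G) (y : α) (c : ℕ) (L : List α)
    (h : ∀ x ∈ L, Cm R (f x) (f y) c) : Cm R (L.map f).prod (f y) (L.length * c) := by
  induction L with
  | nil => simpa using (Cm.one_right (R := R) (f y)).symm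
  | cons x L ih =>
    have := (h x (by simp)).mul_left (ih fun z hz => h z (by simp [hz]))
    simp only [List.map_cons, List.prod_cons, List.length_cons]
    exact this.mono (le_of_eq (by ring))

theorem cancel_list {α Λ : Type*} [DecidableEq Λ] (f : α → G) (lab : α → Λ) (sg : α → ℤˣ) (c : ℕ)
    (n : ℕ) : ∀ L : List α, L.length = n →
    (∀ x ∈ L, ∀ y ∈ L, Cm R (f x) (f y) c) →
    (∀ x ∈ L, ∀ y ∈ L, lab x = lab y → sg y = - sg x → Dst R (f x * f y) 1 c) →
    (∀ l : Λ, (L.map fun x => if lab x = l then (sg x : ℤ) else 0).sum = 0) →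
    Dst R (L.map f).prod 1 (L.length * L.length * c) := by
  induction n using Nat.strong_induction_on with
  | _ n IH =>
    intro L hn hC hD hS
    cases L with
    | nil => simpa using Dst.refl (R := R) (1 : G)
    | cons x L =>
      have hex : ∃ y ∈ L, lab x = lab y ∧ sg y = - sg x := by
        by_contra hcon
        push Not at hcon
        have h0 := hS (lab x)
        have key : ∀ L' : List α, (∀ y ∈ L', y ∈ L) →
            0 ≤ (sg x : ℤ) * (L'.map fun y => if lab y = lab x then (sg y : ℤ) else 0).sum := by
          intro L'
          induction L' with
          | nil => simp
          | cons y L' ih =>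
            intro hsub
            have h1 := ih fun z hz => hsub z (by simp [hz])
            simp only [List.map_cons, List.sum_cons, mul_add]
            have h2 : 0 ≤ (sg x : ℤ) * (if lab y = lab x then (sg y : ℤ) else 0) := by
              split_ifs with hl
              · have h3 := hcon y (hsub y (by simp)) hl.symm
                rcases Int.units_eq_one_or (sg x) with h | h <;>
                rcases Int.units_eq_one_or (sg y) with h' | h' <;>
                simp [h, h'] at h3 ⊢
              · simp
            omega
        have h1 := key L fun y hy => hy
        simp only [List.map_cons, List.sum_cons, if_true] at h0
        have h2 : (sg x : ℤ) * (sg x : ℤ) = 1 := by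
          rcases Int.units_eq_one_or (sg x) with h | h <;> simp [h]
        have h3 := congrArg (fun z => (sg x : ℤ) * z) h0
        simp only [mul_add, mul_zero] at h3
        omega
      obtain ⟨y, hy, hxy, hs⟩ := hex
      obtain ⟨L₁, L₂, rfl⟩ := List.append_of_mem hy
      have hsub : ∀ z ∈ L₁ ++ L₂, z ∈ x :: (L₁ ++ y :: L₂) := by
        intro z hz
        rcases List.mem_append.1 hz with h | h <;> simp [h]
      have hlen : (x :: (L₁ ++ y :: L₂)).length = (L₁ ++ L₂).length + 2 := by
        simp; omega
      have h1 := IH (L₁ ++ L₂).length (by omega) (L₁ ++ L₂) rfl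
        (fun u hu v hv => hC u (hsub u hu) v (hsub v hv))
        (fun u hu v hv => hD u (hsub u hu) v (hsub v hv)) (by
          intro l
          have h0 := hS l
          simp only [List.map_cons, List.map_append, List.sum_cons, List.sum_append] at h0 ⊢
          rw [← hxy, hs] at h0
          have : (if lab x = l then (sg x : ℤ) else 0) +
            (if lab x = l then ((- sg x : ℤˣ) : ℤ) else 0) = 0 := by
            split_ifs <;> simp
          omega)
      have h2 := cm_list (R := R) f y c L₁ fun z hz =>
        hC z (hsub z (by simp [hz])) y (by simp)
      have h3 := hD x (by simp) y (by simp) hxy hs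
      have h4 : Dst R (f x * ((L₁.map f).prod * f y) * (L₂.map f).prod)
        (f x * (f y * (L₁.map f).prod) * (L₂.map f).prod) _ := (Dst.mul_left _ h2).mul_right _
      have h5 := h3.mul_right ((L₁ ++ L₂).map f).prod
      have h6 := h4.trans (Dst.trans (Dst.of_eq (by
        simp [mul_assoc])) h5)
      rw [one_mul] at h6
      have h7 := h6.trans h1
      have e1 : ((x :: (L₁ ++ y :: L₂)).map f).prod =
        f x * ((L₁.map f).prod * f y) * (L₂.map f).prod := by simp [mul_assoc]
      rw [e1]
      refine h7.mono ?_
      rw [hlen]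
      have : L₁.length ≤ (L₁ ++ L₂).length := by simp
      nlinarith [Nat.zero_le ((L₁ ++ L₂).length * c), Nat.mul_le_mul_right c this]

end Cancellation

section Baumslag

variable {G : Type*} [Group G] {R : Set G} {I J : Type*} [Fintype J] [DecidableEq J]

/-- The commutation and action relations hold, at cost one. -/
structure BData (R : Set G) (a : I → G) (g : J ⊕ J → G) (m : J → ℕ) : Prop where
  hq : ∀ x y, Cm R (g x) (g y) 1
  hm : ∀ j, Dst R (g (Sum.inl j) ^ m j) 1 1
  ht : ∀ i j, Dst R (g (Sum.inr j) * a i * (g (Sum.inr j))⁻¹)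
    ((g (Sum.inl j) * a i * (g (Sum.inl j))⁻¹) * (a i)⁻¹ ^ 3 *
      ((g (Sum.inl j))⁻¹ * a i * g (Sum.inl j))) 1
  hb : ∀ i l (e : J ⊕ J → ℤ), (∀ j, (e (Sum.inl j)).natAbs ≤ 2) → (∀ j, e (Sum.inr j) = 0) →
    Cm R (a i) (nf g e * a l * (nf g e)⁻¹) 1

/-- Conjugate of a base generator by a normal form. -/
noncomputable def av (a : I → G) (g : J ⊕ J → G) (i : I) (e : J ⊕ J → ℤ) : G :=
  nf g e * a i * (nf g e)⁻¹

/-- Exponent vectors involving no `t`-letters. -/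
def SOnly (e : J ⊕ J → ℤ) : Prop := ∀ j, e (Sum.inr j) = 0

theorem av_zero (a : I → G) (g : J ⊕ J → G) (i : I) : av a g i 0 = a i := by
  simp [av, nf_zero]

variable {a : I → G} {g : J ⊕ J → G} {m : J → ℕ}

theorem BData.left_shift (H : BData R a g m) (h e : J ⊕ J → ℤ) (i : I) :
    Dst R (nf g h * av a g i e * (nf g h)⁻¹) (av a g i (h + e)) (2 * (nrm h * nrm e)) := by
  have := (nf_mul H.hq h e).conjBy (a i)
  unfold av
  convert this using 1
  group

theorem BData.right_shift (H : BData R a g m) (e h : J ⊕ J → ℤ) (i : I) :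
    Dst R (nf g e * av a g i h * (nf g e)⁻¹) (av a g i (e + h)) (2 * (nrm e * nrm h)) :=
  H.left_shift e h i

theorem BData.cm_shift (H : BData R a g m) (h f e : J ⊕ J → ℤ) (i l : I) {K : ℕ}
    (hK : Cm R (av a g i f) (av a g l e) K) :
    Cm R (av a g i (h + f)) (av a g l (h + e))
      (K + 4 * (nrm h * nrm f) + 4 * (nrm h * nrm e)) :=
  ((hK.conj (nf g h)).congr (H.left_shift h f i) (H.left_shift h e l)).mono (by omega)

theorem BData.t_expand (H : BData R a g m) (e : J ⊕ J → ℤ) (i : I) (j : J) :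
    Dst R (av a g i (e + Pi.single (Sum.inr j) 1))
      (av a g i (e + Pi.single (Sum.inl j) 1) * (av a g i e)⁻¹ ^ 3 *
        av a g i (e + Pi.single (Sum.inl j) (-1))) (6 * nrm e + 1) := by
  have h0 := (H.right_shift e (Pi.single (Sum.inr j) 1) i).symm
  have h1 := H.right_shift e (Pi.single (Sum.inl j) 1) i
  have h2 := H.right_shift e (Pi.single (Sum.inl j) (-1)) i
  have h3 := (H.ht i j).conj (nf g e)
  rw [nrm_single] at h0 h1 h2
  have h4 := (h1.mul_right ((av a g i e)⁻¹ ^ 3)).mul h2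
  have h5 : Dst R (nf g e * av a g i (Pi.single (Sum.inr j) 1) * (nf g e)⁻¹)
      (nf g e * av a g i (Pi.single (Sum.inl j) 1) * (nf g e)⁻¹ * (av a g i e)⁻¹ ^ 3 *
        (nf g e * av a g i (Pi.single (Sum.inl j) (-1)) * (nf g e)⁻¹)) 1 := by
    convert h3 using 1
    · simp [av, nf_single]
    · simp only [av, nf_single, zpow_one, zpow_neg, inv_inv, pow_succ, pow_zero, one_mul]
      group
  have h6 := h0.trans (h5.trans h4)
  refine h6.mono ?_
  simp
  omega

/-- Cost bound of commutators. -/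
def CB (B n : ℕ) : ℕ := (4 * B * B + 116 * B + 9) * 26 ^ n

theorem BData.cm_pos (H : BData R a g m) {n P : ℕ} (e : J ⊕ J → ℤ) (he : SOnly e)
    (hn : nrm e ≤ n + 1) (j : J) (hj : 3 ≤ e (Sum.inl j)) (i l : I)
    (IH : ∀ e : J ⊕ J → ℤ, SOnly e → nrm e ≤ n → ∀ i l, Cm R (av a g i 0) (av a g l e) P) :
    Cm R (av a g i 0) (av a g l e) (25 * P + 116 * (n + 1) + 8) := by
  have hs : ∀ c : ℤ, SOnly (e + Pi.single (Sum.inl j) c) := by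
    intro c j'; simpa using he j'
  have hnm : ∀ c : ℤ, -4 ≤ c → c ≤ -1 → nrm (e + Pi.single (Sum.inl j) c) ≤ n := by
    intro c h1 h2
    have := nrm_update e (Sum.inl j) c
    omega
  have hadd : ∀ (e : J ⊕ J → ℤ) (c d : ℤ), e + Pi.single (Sum.inl j) c + Pi.single (Sum.inl j) d =
      e + Pi.single (Sum.inl j) (c + d) := by
    intro e c d; rw [add_assoc, ← Pi.single_add]
  set γ : J ⊕ J → ℤ := e + Pi.single (Sum.inl j) (-2) with hγ
  -- pairs
  have hpair : ∀ p q : ℤ, -1 ≤ p → p ≤ 1 → -2 ≤ q - p → q - p ≤ 1 →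
      Cm R (av a g i (0 + Pi.single (Sum.inl j) p)) (av a g l (γ + Pi.single (Sum.inl j) q))
        (P + 4 * n) := by
    intro p q h1 h2 h3 h4
    have h5 := hnm (-2 + (q - p)) (by omega) (by omega)
    have h5' := IH (e + Pi.single (Sum.inl j) (-2 + (q - p))) (hs (-2 + (q - p))) h5 i l
    have h6 := H.cm_shift (Pi.single (Sum.inl j) p : J ⊕ J → ℤ) _ _ i l h5'
    rw [nrm_zero, nrm_single] at h6
    have e1 : (Pi.single (Sum.inl j) p : J ⊕ J → ℤ) + (e + Pi.single (Sum.inl j) (-2 + (q - p))) =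
        γ + Pi.single (Sum.inl j) q := by
      rw [hγ, add_comm, hadd, hadd]; congr 2; ring
    rw [e1, add_comm _ (0 : J ⊕ J → ℤ)] at h6
    refine h6.mono ?_
    have h7 : p.natAbs ≤ 1 := by omega
    have := Nat.mul_le_mul h7 h5
    omega
  have hz : ∀ e : J ⊕ J → ℤ, e = e + Pi.single (Sum.inl j) 0 := by intro e; simp
  -- conjugation by t
  have hγn : nrm γ ≤ n := hnm (-2) (by norm_num) (by norm_num)
  have t1 := (IH γ (hs (-2)) hγn i l)
  have t2 := H.cm_shift (Pi.single (Sum.inr j) 1) 0 γ i l t1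
  rw [nrm_zero, nrm_single, add_comm _ (0 : J ⊕ J → ℤ), add_comm _ γ] at t2
  have t3 := t2.congr (H.t_expand 0 i j) (H.t_expand γ l j)
  rw [nrm_zero] at t3
  have h0p := hpair
  have q1 := hpair 1 1 (by omega) (by omega) (by omega) (by omega)
  have q2 := hpair 1 0 (by omega) (by omega) (by omega) (by omega)
  have q3 := hpair 1 (-1) (by omega) (by omega) (by omega) (by omega)
  have q4 := hpair 0 1 (by omega) (by omega) (by omega) (by omega)
  have q5 := hpair 0 0 (by omega) (by omega) (by omega) (by omega)
  have q6 := hpair 0 (-1) (by omega) (by omega) (by omega) (by omega)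
  have q7 := hpair (-1) 0 (by omega) (by omega) (by omega) (by omega)
  have q8 := hpair (-1) (-1) (by omega) (by omega) (by omega) (by omega)
  rw [← hz] at q2 q4 q6 q7
  rw [← hz, ← hz] at q5
  have s1 := Cm.step t3 q1 q2 q3 q4 q5 q6 q7 q8
  have s2 := H.cm_shift (Pi.single (Sum.inl j) 1) _ _ i l s1
  have e1 : (Pi.single (Sum.inl j) 1 : J ⊕ J → ℤ) + (0 + Pi.single (Sum.inl j) (-1)) = 0 := by
    rw [zero_add, ← Pi.single_add]; simp
  have e2 : (Pi.single (Sum.inl j) 1 : J ⊕ J → ℤ) + (γ + Pi.single (Sum.inl j) 1) = e := by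
    rw [hγ, add_comm, hadd, hadd]; simp
  rw [e1, e2, zero_add, nrm_single, nrm_single] at s2
  refine s2.mono ?_
  have h8 : nrm (γ + Pi.single (Sum.inl j) 1) ≤ n := by
    rw [hγ, hadd]; exact hnm (-2 + 1) (by norm_num) (by norm_num)
  simp
  omega

theorem BData.cm_base (H : BData R a g m) (B n : ℕ) (hnB : n ≤ B) :
    ∀ e, SOnly e → nrm e ≤ n → ∀ i l, Cm R (av a g i 0) (av a g l e) (CB B n) := by
  induction n with
  | zero =>
    intro e he hn i l
    have := H.hb i l e (fun j => (le_nrm e _).trans (by omega)) he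
    rw [av_zero]
    exact this.mono (by unfold CB; simp)
  | succ n IH =>
    intro e he hn i l
    have IH := IH (by omega)
    have hCB : 25 * CB B n + 116 * (n + 1) + 8 + 4 * (n + 1) * (n + 1) ≤ CB B (n + 1) := by
      unfold CB
      have : 1 ≤ 26 ^ n := Nat.one_le_pow _ _ (by norm_num)
      have h2 := Nat.mul_le_mul_left (4 * B * B + 116 * B + 9) this
      have h3 : (n + 1) * (n + 1) ≤ B * B := Nat.mul_le_mul hnB hnB
      rw [pow_succ]
      nlinarith
    by_cases hbox : ∀ j, (e (Sum.inl j)).natAbs ≤ 2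
    · have := H.hb i l e hbox he
      rw [av_zero]
      exact this.mono (by omega)
    · push Not at hbox
      obtain ⟨j, hj⟩ := hbox
      rcases le_total 0 (e (Sum.inl j)) with h0 | h0
      · exact (H.cm_pos e he hn j (by omega) i l IH).mono (by omega)
      · have h1 := (H.cm_pos (-e) (fun j => by simpa using he j) (by rwa [nrm_neg]) j
          (by simp; omega) l i IH).symm
        have h2 := H.cm_shift e (-e) 0 i l h1
        rw [nrm_neg, nrm_zero, add_neg_cancel, add_zero] at h2
        refine h2.mono ?_
        have := Nat.mul_le_mul hn hn
        nlinarith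

theorem BData.cm_any (H : BData R a g m) (B : ℕ) (e f : J ⊕ J → ℤ) (he : SOnly e) (hf : SOnly f)
    (heB : nrm e ≤ B) (hfB : nrm f ≤ B) (i l : I) :
    Cm R (av a g i e) (av a g l f) (CB (2 * B) (2 * B) + 8 * B * B) := by
  have hs : nrm (f - e) ≤ 2 * B := (nrm_sub_le f e).trans (by omega)
  have h1 := H.cm_base (2 * B) (2 * B) le_rfl (f - e) (fun j => by simp [he j, hf j]) hs i l
  have h2 := H.cm_shift e 0 (f - e) i l h1
  rw [nrm_zero, add_zero, add_sub_cancel] at h2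
  refine h2.mono ?_
  have := Nat.mul_le_mul heB hs
  nlinarith

theorem BData.dst_congr (H : BData R a g m) (e f : J ⊕ J → ℤ) (he : SOnly e) (hf : SOnly f)
    (hef : ∀ j, (e (Sum.inl j) : ZMod (m j)) = (f (Sum.inl j) : ZMod (m j))) :
    Dst R (nf g e) (nf g f) (nrm (e - f)) := by
  refine nf_congr_dst e f ?_
  rintro (j | j)
  · have h1 := (ZMod.intCast_eq_intCast_iff_dvd_sub _ _ _).1 (hef j).symm
    obtain ⟨c, hc⟩ := h1
    have h2 := ((H.hm j).zpow c).mul_right (g (Sum.inl j) ^ f (Sum.inl j))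
    rw [one_zpow, one_mul, ← zpow_natCast, ← zpow_mul, ← hc, ← zpow_add] at h2
    rw [sub_add_cancel] at h2
    by_cases hm : m j = 0
    · have : e (Sum.inl j) = f (Sum.inl j) := by
        rw [hm] at hc; simp at hc; omega
      rw [this]
      simpa using Dst.refl (R := R) _
    · refine h2.mono ?_
      rw [hc, Int.natAbs_mul, Int.natAbs_natCast]
      rw [mul_one]
      exact Nat.le_mul_of_pos_left _ (Nat.pos_of_ne_zero hm)
  · rw [he j, hf j]
    simpa using Dst.refl (R := R) (1 : G)

end Baumslag

section Expressions

variable {G : Type*} [Group G] {R : Set G} {I J : Type*} [Fintype J] [DecidableEq J]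

/-- The value of a signed term. -/
noncomputable def ev (a : I → G) (g : J ⊕ J → G) (x : ℤˣ × I × (J ⊕ J → ℤ)) : G :=
  av a g x.2.1 x.2.2 ^ (x.1 : ℤ)

/-- The value of a list of signed terms. -/
noncomputable def evl (a : I → G) (g : J ⊕ J → G) (L : List (ℤˣ × I × (J ⊕ J → ℤ))) : G :=
  (L.map (ev a g)).prod

variable {a : I → G} {g : J ⊕ J → G} {m : J → ℕ}

theorem evl_nil : evl a g [] = 1 := rfl

theorem evl_cons (x) (L) : evl a g (x :: L) = ev a g x * evl a g L := by simp [evl]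

theorem evl_append (L L') : evl a g (L ++ L') = evl a g L * evl a g L' := by simp [evl]

theorem ev_neg (x : ℤˣ × I × (J ⊕ J → ℤ)) : ev a g (-x.1, x.2) = (ev a g x)⁻¹ := by
  simp [ev]

theorem evl_inv (L : List (ℤˣ × I × (J ⊕ J → ℤ))) :
    evl a g ((L.map fun x => (-x.1, x.2)).reverse) = (evl a g L)⁻¹ := by
  unfold evl
  rw [List.prod_inv_reverse, List.map_reverse, List.map_map, List.map_map]
  congr 3
  funext x
  exact ev_neg x

theorem Dst.zpow_unit {g h : G} {N : ℕ} (H : Dst R g h N) (ε : ℤˣ) :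
    Dst R (g ^ (ε : ℤ)) (h ^ (ε : ℤ)) N := by
  have := H.zpow (ε : ℤ)
  rwa [Int.units_natAbs, one_mul] at this

theorem BData.ev_shift (H : BData R a g m) (h : J ⊕ J → ℤ) (x : ℤˣ × I × (J ⊕ J → ℤ)) :
    Dst R (nf g h * ev a g x * (nf g h)⁻¹) (ev a g (x.1, x.2.1, h + x.2.2))
      (2 * (nrm h * nrm x.2.2)) := by
  have := (H.left_shift h x.2.2 x.2.1).zpow_unit x.1
  unfold ev
  rwa [conj_zpow] at this

theorem BData.evl_shift (H : BData R a g m) (h : J ⊕ J → ℤ) (B : ℕ)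
    (L : List (ℤˣ × I × (J ⊕ J → ℤ))) (hL : ∀ x ∈ L, nrm x.2.2 ≤ B) :
    Dst R (nf g h * evl a g L * (nf g h)⁻¹)
      (evl a g (L.map fun x => (x.1, x.2.1, h + x.2.2))) (L.length * (2 * (nrm h * B))) := by
  induction L with
  | nil => simpa [evl] using Dst.refl (R := R) (1 : G)
  | cons x L ih =>
    have h1 := (H.ev_shift h x).mono
      (Nat.mul_le_mul_left 2 (Nat.mul_le_mul_left (nrm h) (hL x (by simp))))
    have h2 := h1.mul (ih fun y hy => hL y (by simp [hy]))
    rw [List.map_cons, evl_cons, evl_cons]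
    have e1 : nf g h * ev a g x * (nf g h)⁻¹ * (nf g h * evl a g L * (nf g h)⁻¹) =
      nf g h * (ev a g x * evl a g L) * (nf g h)⁻¹ := by group
    rw [e1] at h2
    refine h2.mono ?_
    rw [List.length_cons]
    exact le_of_eq (by ring)

/-- `L` consists of terms without `t`-letters, of norm at most `B`. -/
def GoodL (B : ℕ) (L : List (ℤˣ × I × (J ⊕ J → ℤ))) : Prop :=
  ∀ x ∈ L, SOnly x.2.2 ∧ nrm x.2.2 ≤ B

theorem GoodL.append {B : ℕ} {L L' : List (ℤˣ × I × (J ⊕ J → ℤ))} (h : GoodL B L)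
    (h' : GoodL B L') : GoodL B (L ++ L') := by
  intro x hx
  rcases List.mem_append.1 hx with hx | hx
  · exact h x hx
  · exact h' x hx

theorem GoodL.inv {B : ℕ} {L : List (ℤˣ × I × (J ⊕ J → ℤ))} (h : GoodL B L) :
    GoodL B ((L.map fun x => (-x.1, x.2)).reverse) := by
  intro x hx
  rw [List.mem_reverse, List.mem_map] at hx
  obtain ⟨y, hy, rfl⟩ := hx
  exact h y hy

theorem BData.expand_pos (H : BData R a g m) (B : ℕ) (τ : ℕ) : ∀ (i : I) (e : J ⊕ J → ℤ),
    (∀ j, 0 ≤ e (Sum.inr j)) → ∑ j, (e (Sum.inr j)).natAbs = τ → nrm e ≤ B →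
    ∃ (L : List (ℤˣ × I × (J ⊕ J → ℤ))) (K : ℕ), GoodL B L ∧ L.length ≤ 5 ^ τ ∧
      Dst R (av a g i e) (evl a g L) K ∧ K + (6 * B + 1) ≤ (6 * B + 1) * 5 ^ τ := by
  induction τ with
  | zero =>
    intro i e h0 hs hB
    have hso : SOnly e := by
      intro j
      have := (Finset.sum_eq_zero_iff.1 hs) j (Finset.mem_univ j)
      omega
    refine ⟨[(1, i, e)], 0, ?_, by simp, ?_, by simp⟩
    · intro x hx
      rw [List.mem_singleton] at hx
      subst hx
      exact ⟨hso, hB⟩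
    · refine Dst.of_eq ?_
      simp [evl, ev]
  | succ τ IH =>
    intro i e h0 hs hB
    obtain ⟨j, hj⟩ : ∃ j, 1 ≤ e (Sum.inr j) := by
      by_contra hcon
      push Not at hcon
      have : ∑ j, (e (Sum.inr j)).natAbs = 0 := by
        refine Finset.sum_eq_zero fun j _ => ?_
        have h1 := h0 j
        have h2 := hcon j
        omega
      omega
    obtain ⟨e', he'⟩ : ∃ e' : J ⊕ J → ℤ, e' = e + Pi.single (Sum.inr j) (-1) := ⟨_, rfl⟩
    have hee : e = e' + Pi.single (Sum.inr j) 1 := by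
      rw [he', add_assoc, ← Pi.single_add]; simp
    have hn' : nrm e' + 1 = nrm e := by
      have := nrm_update e (Sum.inr j) (-1)
      rw [← he'] at this
      omega
    have hval : ∀ j', e (Sum.inr j') = e' (Sum.inr j') + if j' = j then 1 else 0 := by
      intro j'
      rw [hee]
      simp [Pi.single_apply]
    have h0' : ∀ j', 0 ≤ e' (Sum.inr j') := by
      intro j'
      have h1 := hval j'
      have h2 := h0 j'
      split_ifs at h1 with h
      · subst h; omega
      · omega
    have hs' : ∑ j', (e' (Sum.inr j')).natAbs = τ := by
      have h1 : ∀ j', (e (Sum.inr j')).natAbs = (e' (Sum.inr j')).natAbs + if j' = j then 1 else 0 := by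
        intro j'
        have h1 := hval j'
        have h2 := h0' j'
        split_ifs at h1 ⊢ <;> omega
      rw [Finset.sum_congr rfl fun j' _ => h1 j', Finset.sum_add_distrib] at hs
      simp at hs
      exact hs
    have hsh : ∀ c : ℤ, ∀ j', (e' + Pi.single (Sum.inl j) c : J ⊕ J → ℤ) (Sum.inr j') =
        e' (Sum.inr j') := by
      intro c j'; simp
    have hnsh : ∀ c : ℤ, c.natAbs ≤ 1 → nrm (e' + Pi.single (Sum.inl j) c) ≤ B := by
      intro c hc
      have := nrm_add_le e' (Pi.single (Sum.inl j) c)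
      rw [nrm_single] at this
      omega
    obtain ⟨L₁, K₁, g1, l1, d1, k1⟩ := IH i (e' + Pi.single (Sum.inl j) 1)
      (fun j' => by rw [hsh]; exact h0' j') (by simp only [hsh]; exact hs') (hnsh 1 (by simp))
    obtain ⟨L₀, K₀, g0, l0, d0, k0⟩ := IH i e' h0' hs' (by omega)
    obtain ⟨L₂, K₂, g2, l2, d2, k2⟩ := IH i (e' + Pi.single (Sum.inl j) (-1))
      (fun j' => by rw [hsh]; exact h0' j') (by simp only [hsh]; exact hs') (hnsh (-1) (by simp))
    set M := (L₀.map fun x => (-x.1, x.2)).reverse with hM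
    have hMl : M.length = L₀.length := by simp [hM]
    have hMe : evl a g M = (evl a g L₀)⁻¹ := evl_inv L₀
    refine ⟨L₁ ++ (M ++ (M ++ (M ++ L₂))), 6 * nrm e' + 1 + (K₁ + 3 * K₀ + K₂), ?_, ?_, ?_, ?_⟩
    · exact g1.append (g0.inv.append (g0.inv.append (g0.inv.append g2)))
    · simp only [List.length_append, hMl]
      rw [pow_succ]; omega
    · have t1 := H.t_expand e' i j
      rw [← hee] at t1
      refine t1.trans ?_
      have t2 := (d1.mul (d0.inv.pow 3)).mul d2
      convert t2 using 1
      simp only [evl_append, hMe]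
      group
    · rw [pow_succ]
      have h6 : 6 * nrm e' ≤ 6 * B := by omega
      nlinarith

theorem BData.expand_term (H : BData R a g m) (B : ℕ) (x : ℤˣ × I × (J ⊕ J → ℤ))
    (h0 : ∀ j, 0 ≤ x.2.2 (Sum.inr j)) (hB : nrm x.2.2 ≤ B) :
    ∃ (L : List (ℤˣ × I × (J ⊕ J → ℤ))), GoodL B L ∧ L.length ≤ 5 ^ B ∧
      Dst R (ev a g x) (evl a g L) ((6 * B + 1) * 5 ^ B) := by
  obtain ⟨ε, i, e⟩ := x
  obtain ⟨L, K, h1, h2, h3, h4⟩ := H.expand_pos B _ i e h0 rfl hB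
  have hτ : ∑ j, (e (Sum.inr j)).natAbs ≤ B := by
    refine le_trans ?_ hB
    unfold nrm
    rw [Fintype.sum_sum_type]
    exact Nat.le_add_left _ _
  have h5 : 5 ^ (∑ j, (e (Sum.inr j)).natAbs) ≤ 5 ^ B := Nat.pow_le_pow_right (by norm_num) hτ
  have h6 := Nat.mul_le_mul_left (6 * B + 1) h5
  have h7 : Dst R (av a g i e) (evl a g L) ((6 * B + 1) * 5 ^ B) := h3.mono (by omega)
  rcases Int.units_eq_one_or ε with h | h
  · refine ⟨L, h1, h2.trans h5, ?_⟩
    subst h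
    simpa [ev] using h7
  · refine ⟨(L.map fun x => (-x.1, x.2)).reverse, h1.inv, by simpa using h2.trans h5, ?_⟩
    subst h
    rw [evl_inv]
    simpa [ev] using h7.inv

theorem BData.expand_list (H : BData R a g m) (B : ℕ) (L : List (ℤˣ × I × (J ⊕ J → ℤ)))
    (hL : ∀ x ∈ L, (∀ j, 0 ≤ x.2.2 (Sum.inr j)) ∧ nrm x.2.2 ≤ B) :
    ∃ (L' : List (ℤˣ × I × (J ⊕ J → ℤ))), GoodL B L' ∧ L'.length ≤ L.length * 5 ^ B ∧
      Dst R (evl a g L) (evl a g L') (L.length * ((6 * B + 1) * 5 ^ B)) := by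
  induction L with
  | nil => exact ⟨[], by simp [GoodL], by simp, by simpa using Dst.refl (R := R) _⟩
  | cons x L ih =>
    obtain ⟨L₁, a1, a2, a3⟩ := ih fun y hy => hL y (by simp [hy])
    obtain ⟨L₂, b1, b2, b3⟩ := H.expand_term B x (hL x (by simp)).1 (hL x (by simp)).2
    refine ⟨L₂ ++ L₁, b1.append a1, ?_, ?_⟩
    · simp only [List.length_append, List.length_cons, add_mul, one_mul]; omega
    · rw [evl_append, evl_cons]
      refine (b3.mul a3).mono (le_of_eq ?_)
      rw [List.length_cons]; ring

/-- The generator attached to a letter. -/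
def letterVal (a : I → G) (g : J ⊕ J → G) (x : (I ⊕ (J ⊕ J)) × Bool) : G :=
  cond x.2 (Sum.elim a g x.1) (Sum.elim a g x.1)⁻¹

theorem BData.word (H : BData R a g m) (l : List ((I ⊕ (J ⊕ J)) × Bool)) :
    ∃ (L : List (ℤˣ × I × (J ⊕ J → ℤ))) (e : J ⊕ J → ℤ), L.length ≤ l.length ∧
      (∀ x ∈ L, nrm x.2.2 ≤ l.length) ∧ nrm e ≤ l.length ∧
      Dst R (l.map (letterVal a g)).prod (evl a g L * nf g e) (3 * l.length ^ 3) := by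
  induction l with
  | nil =>
    exact ⟨[], 0, by simp, by simp, by simp [nrm_zero], by
      simpa [evl_nil, nf_zero] using Dst.refl (R := R) (1 : G)⟩
  | cons x l ih =>
    obtain ⟨L, e, h1, h2, h3, h4⟩ := ih
    have h5 := h4.mul_left (letterVal a g x)
    rw [List.map_cons, List.prod_cons, List.length_cons]
    obtain ⟨x, b⟩ := x
    have hpw : 3 * l.length ^ 3 + 2 * l.length * l.length + l.length ≤ 3 * (l.length + 1) ^ 3 := by
      nlinarith
    rcases x with i | y
    · refine ⟨(cond b 1 (-1), i, 0) :: L, e, by simpa using h1, ?_, by omega, ?_⟩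
      · intro x hx
        rcases List.mem_cons.1 hx with rfl | hx
        · simp [nrm_zero]
        · have := h2 x hx; omega
      · refine Dst.mono (h5.trans (Dst.of_eq ?_)) (by omega)
        rw [evl_cons, mul_assoc]
        congr 1
        cases b <;> simp [letterVal, ev, av_zero]
    · obtain ⟨c, hc, hcv⟩ : ∃ c : ℤ, c.natAbs = 1 ∧
          letterVal a g (Sum.inr y, b) = nf g (Pi.single y c) := by
        cases b
        · exact ⟨-1, by simp, by simp [letterVal, nf_single]⟩
        · exact ⟨1, by simp, by simp [letterVal, nf_single]⟩
      rw [hcv] at h5 ⊢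
      have h6 := H.evl_shift (Pi.single y c) l.length L h2
      have h7 := nf_mul H.hq (Pi.single y c) e
      rw [nrm_single, hc] at h6 h7
      refine ⟨_, _, ?_, ?_, ?_, (h5.trans ((Dst.of_eq ?_).trans (h6.mul h7))).mono ?_⟩
      · simp; omega
      · intro x hx
        rw [List.mem_map] at hx
        obtain ⟨z, hz, rfl⟩ := hx
        have := nrm_add_le (Pi.single y c) z.2.2
        rw [nrm_single, hc] at this
        have := h2 z hz
        simp only
        omega
      · have := nrm_add_le (Pi.single y c) e
        rw [nrm_single, hc] at this
        omega
      · group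
      · have := Nat.mul_le_mul_right l.length h1
        nlinarith

/-- The total cost. -/
def totCost (k n : ℕ) : ℕ :=
  3 * n ^ 3 + n + (n * (2 * (k * n * n)) + (n * ((6 * ((k + 1) * n) + 1) * 5 ^ ((k + 1) * n)) +
    n * 5 ^ ((k + 1) * n) * (n * 5 ^ ((k + 1) * n)) *
      (CB (2 * ((k + 1) * n)) (2 * ((k + 1) * n)) + 8 * ((k + 1) * n) * ((k + 1) * n) +
        4 * ((k + 1) * n))))

theorem BData.upper [DecidableEq I] (H : BData R a g m) {K : Type*} [Group K] (φ : G →* K)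
    (hφ : ∀ r ∈ R, φ r = 1)
    (h1 : ∀ (L : List (ℤˣ × I × (J ⊕ J → ℤ))) e, φ (evl a g L * nf g e) = 1 →
      SOnly e ∧ ∀ j, (e (Sum.inl j) : ZMod (m j)) = 0)
    (h2 : ∀ (L : List (ℤˣ × I × (J ⊕ J → ℤ))), (∀ x ∈ L, SOnly x.2.2) → φ (evl a g L) = 1 →
      ∀ (i : I) (θ : ∀ j, ZMod (m j)),
      (L.map fun x => if (x.2.1, fun j => (x.2.2 (Sum.inl j) : ZMod (m j))) = (i, θ)
        then (x.1 : ℤ) else 0).sum = 0)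
    (l : List ((I ⊕ (J ⊕ J)) × Bool)) (hl : φ (l.map (letterVal a g)).prod = 1) :
    AreaLe R (l.map (letterVal a g)).prod (totCost (Fintype.card J) l.length) := by
  obtain ⟨L, e, b1, b2, b3, b4⟩ := H.word l
  set n := l.length with hn
  set k := Fintype.card J with hk
  set w := (l.map (letterVal a g)).prod with hw
  have c1 := b4.map_eq φ hφ
  rw [hl] at c1
  obtain ⟨c2, c3⟩ := h1 L e c1.symm
  have c4 := H.dst_congr e 0 c2 (fun _ => rfl) (fun j => by simpa using c3 j)
  rw [sub_zero, nf_zero] at c4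
  have c5 := b4.trans (c4.mul_left (evl a g L))
  rw [mul_one] at c5
  -- conjugate by a large power of the `t`-letters
  set e0 : J ⊕ J → ℤ := Sum.elim (fun _ => 0) (fun _ => (n : ℤ)) with he0
  have hne0 : nrm e0 = k * n := by
    simp [nrm, he0, Fintype.sum_sum_type, hk]
  have d1 := H.evl_shift e0 n L b2
  set L1 := L.map fun x => (x.1, x.2.1, e0 + x.2.2) with hL1
  set B := (k + 1) * n with hB
  have d2 : ∀ x ∈ L1, (∀ j, 0 ≤ x.2.2 (Sum.inr j)) ∧ nrm x.2.2 ≤ B := by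
    intro x hx
    rw [hL1, List.mem_map] at hx
    obtain ⟨y, hy, rfl⟩ := hx
    have h3 := b2 y hy
    refine ⟨fun j => ?_, ?_⟩
    · have := le_nrm y.2.2 (Sum.inr j)
      simp only [Pi.add_apply, he0, Sum.elim_inr]
      omega
    · have := nrm_add_le e0 y.2.2
      simp only
      rw [hB, add_mul, one_mul]
      omega
  obtain ⟨L', f1, f2, f3⟩ := H.expand_list B L1 d2
  have hL1l : L1.length = L.length := by simp [hL1]
  rw [hL1l] at f2 f3
  have hf : φ (evl a g L') = 1 := by
    rw [← f3.map_eq φ hφ, ← d1.map_eq φ hφ, map_mul, map_mul, ← c5.map_eq φ hφ, hl]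
    simp
  have s1 := h2 L' (fun x hx => (f1 x hx).1) hf
  have s2 := cancel_list (R := R) (ev a g)
    (fun x : ℤˣ × I × (J ⊕ J → ℤ) => (x.2.1, fun j => (x.2.2 (Sum.inl j) : ZMod (m j))))
    (fun x => x.1) (CB (2 * B) (2 * B) + 8 * B * B + 4 * B) L'.length L' rfl
    (by
      intro x hx y hy
      have := H.cm_any B x.2.2 y.2.2 (f1 x hx).1 (f1 y hy).1 (f1 x hx).2 (f1 y hy).2 x.2.1 y.2.1
      have := (this.zpow_left (x.1 : ℤ)).zpow_right (y.1 : ℤ)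
      rw [Int.units_natAbs, Int.units_natAbs] at this
      exact this.mono (by omega))
    (by
      intro x hx y hy hxy hs
      obtain ⟨ε, i, e⟩ := x
      obtain ⟨ε', i', e'⟩ := y
      simp only [Prod.mk.injEq] at hxy hs
      obtain ⟨rfl, hcl⟩ := hxy
      subst hs
      have h3 := H.dst_congr e e' (f1 _ hx).1 (f1 _ hy).1 (fun j => congrFun hcl j)
      have h4 := ((h3.conjBy (a i)).zpow_unit ε).mul_right (ev a g (-ε, i, e'))
      have h5 : ev a g (-ε, i, e') = (ev a g (ε, i, e'))⁻¹ := ev_neg (ε, i, e')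
      have h6 : (nf g e' * a i * (nf g e')⁻¹) ^ (ε : ℤ) = ev a g (ε, i, e') := rfl
      rw [h6, h5, mul_inv_cancel] at h4
      rw [h5]
      refine Dst.mono h4 ?_
      have := nrm_sub_le e e'
      have h7 : nrm e ≤ B := (f1 _ hx).2
      have h8 : nrm e' ≤ B := (f1 _ hy).2
      omega)
    (by
      rintro ⟨i, θ⟩
      exact s1 i θ)
  have s3 := d1.trans (f3.trans s2)
  have s4 := s3
  unfold Dst at s4
  rw [inv_one, mul_one] at s4
  have s5 := s4.conj (nf g e0)⁻¹
  have s6 : (nf g e0)⁻¹ * (nf g e0 * evl a g L * (nf g e0)⁻¹) * (nf g e0)⁻¹⁻¹ = evl a g L := by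
    group
  rw [s6] at s5
  have s7 := AreaLe.mul c5 s5
  rw [inv_mul_cancel_right] at s7
  refine s7.mono ?_
  unfold totCost
  rw [hne0]
  have hll : L'.length ≤ n * 5 ^ B := f2.trans (Nat.mul_le_mul_right _ b1)
  gcongr

end Expressions

theorem totCost_le (k n : ℕ) : totCost k n ≤ 300 * 2 ^ (20 * (k + 1) * n) := by
  unfold totCost CB
  obtain ⟨B, hB⟩ : ∃ B, B = (k + 1) * n := ⟨_, rfl⟩
  rw [← hB]
  obtain ⟨x, hx⟩ : ∃ x, x = 2 ^ B := ⟨_, rfl⟩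
  have hBx : B ≤ x := hx ▸ Nat.lt_two_pow_self.le
  have hnB : n ≤ B := by rw [hB]; exact Nat.le_mul_of_pos_left _ (by omega)
  have hkn : k * n ≤ B := by rw [hB, add_mul]; omega
  have hnx : n ≤ x := hnB.trans hBx
  have hkx : k * n ≤ x := hkn.trans hBx
  have h1x : 1 ≤ x := hx ▸ Nat.one_le_two_pow
  have h5 : 5 ^ B ≤ x ^ 3 := by
    calc 5 ^ B ≤ 8 ^ B := Nat.pow_le_pow_left (by norm_num) _
      _ = x ^ 3 := by rw [hx, ← pow_mul, mul_comm, pow_mul]; norm_num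
  have h26 : 26 ^ (2 * B) ≤ x ^ 10 := by
    calc 26 ^ (2 * B) ≤ 32 ^ (2 * B) := Nat.pow_le_pow_left (by norm_num) _
      _ = x ^ 10 := by
        rw [hx, ← pow_mul, show (32 : ℕ) = 2 ^ 5 by norm_num, ← pow_mul]; congr 1; ring
  have hfin : 2 ^ (20 * (k + 1) * n) = x ^ 20 := by
    rw [hx, ← pow_mul, hB]; congr 1; ring
  rw [hfin]
  have hp : ∀ i, i ≤ 20 → x ^ i ≤ x ^ 20 := fun i hi => Nat.pow_le_pow_right h1x hi
  have t1 : 3 * n ^ 3 ≤ 3 * x ^ 20 :=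
    Nat.mul_le_mul_left _ ((Nat.pow_le_pow_left hnx 3).trans (hp 3 (by norm_num)))
  have t2 : n ≤ x ^ 20 := hnx.trans (by simpa using hp 1 (by norm_num))
  have t3 : n * (2 * (k * n * n)) ≤ 2 * x ^ 20 := by
    calc n * (2 * (k * n * n)) ≤ x * (2 * (x * x)) := by gcongr
      _ = 2 * x ^ 3 := by ring
      _ ≤ _ := Nat.mul_le_mul_left _ (hp 3 (by norm_num))
  have t4 : n * ((6 * B + 1) * 5 ^ B) ≤ 7 * x ^ 20 := by
    calc n * ((6 * B + 1) * 5 ^ B) ≤ x * ((6 * x + x) * x ^ 3) := by gcongr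
      _ = 7 * x ^ 5 := by ring
      _ ≤ _ := Nat.mul_le_mul_left _ (hp 5 (by norm_num))
  have t5 : n * 5 ^ B * (n * 5 ^ B) * ((4 * (2 * B) * (2 * B) + 116 * (2 * B) + 9) * 26 ^ (2 * B) +
      8 * B * B + 4 * B) ≤ 269 * x ^ 20 := by
    have p1 : 4 * (2 * B) * (2 * B) + 116 * (2 * B) + 9 ≤ 257 * (x * x) := by nlinarith
    have p2 : 8 * B * B + 4 * B ≤ 12 * (x * x) := by nlinarith
    have p3 : n * 5 ^ B ≤ x * x ^ 3 := Nat.mul_le_mul hnx h5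
    have p4 : (4 * (2 * B) * (2 * B) + 116 * (2 * B) + 9) * 26 ^ (2 * B) ≤
        257 * (x * x) * x ^ 10 := Nat.mul_le_mul p1 h26
    have p5 : 12 * (x * x) ≤ 12 * (x * x) * x ^ 10 :=
      Nat.le_mul_of_pos_right _ (Nat.one_le_pow 10 x h1x)
    calc _ ≤ x * x ^ 3 * (x * x ^ 3) * (257 * (x * x) * x ^ 10 + 12 * (x * x) * x ^ 10) := by
          refine Nat.mul_le_mul (Nat.mul_le_mul p3 p3) ?_
          rw [add_assoc]
          exact Nat.add_le_add p4 (p2.trans p5)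
      _ = 269 * x ^ 20 := by ring
  omega

section Presentation

variable {G : Type*} [Group G] {I J : Type*} [Fintype J] [DecidableEq J]

/-- The defining relators. -/
def relsOf (a : I → G) (g : J ⊕ J → G) (m : J → ℕ) : Set G :=
  (Set.range fun p : (J ⊕ J) × (J ⊕ J) => g p.1 * g p.2 * (g p.2 * g p.1)⁻¹) ∪
  (Set.range fun j : J => g (Sum.inl j) ^ m j * 1⁻¹) ∪
  (Set.range fun p : I × J => g (Sum.inr p.2) * a p.1 * (g (Sum.inr p.2))⁻¹ *
    ((g (Sum.inl p.2) * a p.1 * (g (Sum.inl p.2))⁻¹) * (a p.1)⁻¹ ^ 3 *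
      ((g (Sum.inl p.2))⁻¹ * a p.1 * g (Sum.inl p.2)))⁻¹) ∪
  ((fun p : I × I × (J ⊕ J → ℤ) => a p.1 * (nf g p.2.2 * a p.2.1 * (nf g p.2.2)⁻¹) *
    (nf g p.2.2 * a p.2.1 * (nf g p.2.2)⁻¹ * a p.1)⁻¹) ''
    {p | (∀ j, (p.2.2 (Sum.inl j)).natAbs ≤ 2) ∧ ∀ j, p.2.2 (Sum.inr j) = 0})

theorem relsOf_finite [Finite I] (a : I → G) (g : J ⊕ J → G) (m : J → ℕ) :
    (relsOf a g m).Finite := by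
  unfold relsOf
  refine ((((Set.finite_range _).union (Set.finite_range _)).union (Set.finite_range _))).union
    (Set.Finite.image _ ?_)
  have h1 : (Set.Icc (fun _ => -2 : J ⊕ J → ℤ) (fun _ => 2)).Finite := Set.finite_Icc _ _
  refine ((Set.finite_univ (α := I)).prod ((Set.finite_univ (α := I)).prod h1)).subset ?_
  rintro ⟨i, l, e⟩ ⟨h2, h3⟩
  refine ⟨trivial, trivial, ?_⟩
  simp only at h2 h3
  constructor
  · rintro (j | j)
    · have := h2 j; show (-2 : ℤ) ≤ e (Sum.inl j); omega
    · have := h3 j; show (-2 : ℤ) ≤ e (Sum.inr j); omega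
  · rintro (j | j)
    · have := h2 j; show e (Sum.inl j) ≤ (2 : ℤ); omega
    · have := h3 j; show e (Sum.inr j) ≤ (2 : ℤ); omega

theorem relsOf_bdata (a : I → G) (g : J ⊕ J → G) (m : J → ℕ) : BData (relsOf a g m) a g m where
  hq x y := Dst.of_mem (Or.inl (Or.inl (Or.inl ⟨(x, y), rfl⟩)))
  hm j := Dst.of_mem (Or.inl (Or.inl (Or.inr ⟨j, rfl⟩)))
  ht i j := Dst.of_mem (Or.inl (Or.inr ⟨(i, j), rfl⟩))
  hb i l e h1 h2 := Dst.of_mem (Or.inr ⟨(i, l, e), ⟨h1, h2⟩, rfl⟩)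

theorem relsOf_map {K : Type*} [Group K] (φ : G →* K) {a : I → G} {g : J ⊕ J → G} {m : J → ℕ}
    (C : K → Prop) 
    (hq : ∀ x y, C (φ (g x) * φ (g y) * (φ (g y) * φ (g x))⁻¹))
    (hm : ∀ j, C (φ (g (Sum.inl j)) ^ m j))
    (ht : ∀ i j, C (φ (g (Sum.inr j)) * φ (a i) * (φ (g (Sum.inr j)))⁻¹ *
      ((φ (g (Sum.inl j)) * φ (a i) * (φ (g (Sum.inl j)))⁻¹) * (φ (a i))⁻¹ ^ 3 *
      ((φ (g (Sum.inl j)))⁻¹ * φ (a i) * φ (g (Sum.inl j))))⁻¹))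
    (hb : ∀ i l (e : J ⊕ J → ℤ), C (φ (a i) *
      (nf (fun y => φ (g y)) e * φ (a l) * (nf (fun y => φ (g y)) e)⁻¹) *
      (nf (fun y => φ (g y)) e * φ (a l) * (nf (fun y => φ (g y)) e)⁻¹ * φ (a i))⁻¹)) :
    ∀ r ∈ relsOf a g m, C (φ r) := by
  rintro r (((⟨⟨x, y⟩, rfl⟩ | ⟨j, rfl⟩) | ⟨⟨i, j⟩, rfl⟩) | ⟨⟨i, l, e⟩, -, rfl⟩)
  · simpa only [map_mul, map_inv] using hq x y
  · simpa only [map_mul, map_inv, map_pow, inv_one, mul_one] using hm j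
  · simpa only [map_mul, map_inv, map_pow] using ht i j
  · simpa only [map_mul, map_inv, nf_map] using hb i l e

end Presentation

section Ring

variable {T : Type*} [AddCommGroup T]

/-- The element `s + s⁻¹ - 3` of the group ring. -/
noncomputable def fel (s : T) : AddMonoidAlgebra ℤ T :=
  AddMonoidAlgebra.single s 1 + AddMonoidAlgebra.single (-s) 1 - AddMonoidAlgebra.single 0 3

theorem fel_mem (s : T) : fel s ∈ nonZeroDivisors (AddMonoidAlgebra ℤ T) := by
  rw [mem_nonZeroDivisors_iff_right]
  intro x hx
  have key : ∀ θ : T, x.coeff (θ - s) + x.coeff (θ + s) = 3 * x.coeff θ := by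
    intro θ
    have h := congrArg (fun y => AddMonoidAlgebra.coeff y θ) hx
    simp only [fel, mul_add, mul_sub, AddMonoidAlgebra.coeff_add, AddMonoidAlgebra.coeff_sub,
      Finsupp.add_apply, Finsupp.sub_apply, AddMonoidAlgebra.coeff_mul_single_apply,
      AddMonoidAlgebra.coeff_zero, Finsupp.zero_apply, neg_neg, ← sub_eq_add_neg, sub_neg_eq_add, sub_zero] at h
    linarith
  by_contra hne
  have hs : x.coeff.support.Nonempty := by
    rw [Finsupp.support_nonempty_iff]
    exact fun h => hne (AddMonoidAlgebra.coeff_eq_zero.1 h)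
  obtain ⟨θ, h1, h2⟩ := Finset.exists_max_image x.coeff.support (fun t => |x.coeff t|) hs
  have h3 : ∀ t, |x.coeff t| ≤ |x.coeff θ| := by
    intro t
    by_cases ht : t ∈ x.coeff.support
    · exact h2 t ht
    · rw [Finsupp.notMem_support_iff.1 ht, abs_zero]; exact abs_nonneg _
  have h4 := h3 (θ - s)
  have h5 := h3 (θ + s)
  have h6 := key θ
  have h7 : 0 < |x.coeff θ| := abs_pos.2 (Finsupp.mem_support_iff.1 h1)
  have h8 := abs_add_le (x.coeff (θ - s)) (x.coeff (θ + s))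
  rw [h6, abs_mul] at h8
  norm_num at h8
  omega

/-- The ring over which the model lives. -/
abbrev FR (T : Type*) [AddCommGroup T] := FractionRing (AddMonoidAlgebra ℤ T)

/-- Group elements as units. -/
noncomputable def ofU (T : Type*) [AddCommGroup T] : Multiplicative T →* (FR T)ˣ :=
  MonoidHom.toHomUnits (((algebraMap (AddMonoidAlgebra ℤ T) (FR T)) : _ →* FR T).comp
    (AddMonoidAlgebra.of ℤ T))

theorem ofU_val (t : Multiplicative T) : ((ofU T t : (FR T)ˣ) : FR T) =
    algebraMap (AddMonoidAlgebra ℤ T) (FR T) (AddMonoidAlgebra.single t.toAdd 1) := rfl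

/-- `s + s⁻¹ - 3` as a unit. -/
noncomputable def felU (s : T) : (FR T)ˣ :=
  (IsLocalization.map_units (FR T) (⟨fel s, fel_mem s⟩ : nonZeroDivisors _)).unit

theorem felU_val (s : T) : ((felU s : (FR T)ˣ) : FR T) =
    (ofU T (Multiplicative.ofAdd s) : FR T) + ((ofU T (Multiplicative.ofAdd s))⁻¹ : (FR T)ˣ) - 3 := by
  rw [← map_inv, ofU_val, ofU_val]
  have : (3 : FR T) = algebraMap (AddMonoidAlgebra ℤ T) (FR T) (AddMonoidAlgebra.single 0 3) := by
    rw [← map_ofNat (algebraMap (AddMonoidAlgebra ℤ T) (FR T)) 3]; rfl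
  rw [this, ← map_add, ← map_sub]
  rfl

end Ring

section ModelDef

/-- The acting group of the model. -/
abbrev QG (T J : Type) [AddCommGroup T] := (FR T)ˣ × Multiplicative T × Multiplicative (J → ℤ)

/-- Units act on vectors by scaling. -/
noncomputable def unitAct (T I : Type) [AddCommGroup T] :
    (FR T)ˣ →* MulAut (Multiplicative (I → FR T)) :=
  MonoidHom.mk' (fun u => AddEquiv.toMultiplicative (DistribMulAction.toAddEquiv (I → FR T) u)) (by
    intro s t
    refine MulEquiv.ext fun x => ?_
    exact congrArg Multiplicative.ofAdd (mul_smul s t (Multiplicative.toAdd x)))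

/-- The action in the model. -/
noncomputable def mAct (T I J : Type) [AddCommGroup T] :
    QG T J →* MulAut (Multiplicative (I → FR T)) :=
  (unitAct T I).comp (MonoidHom.fst _ _)

/-- The model group. -/
abbrev Model (T I J : Type) [AddCommGroup T] :=
  SemidirectProduct (Multiplicative (I → FR T)) (QG T J) (mAct T I J)

theorem mAct_apply {T I J : Type} [AddCommGroup T] (q : QG T J) (v : I → FR T) :
    mAct T I J q (Multiplicative.ofAdd v) = Multiplicative.ofAdd ((q.1 : FR T) • v) := rfl

/-- vectors -/
noncomputable def vec {T I J : Type} [AddCommGroup T] (v : I → FR T) : Model T I J :=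
  SemidirectProduct.inl (Multiplicative.ofAdd v)

theorem vec_add {T I J : Type} [AddCommGroup T] (v w : I → FR T) :
    (vec (v + w) : Model T I J) = vec v * vec w := by
  unfold vec; rw [ofAdd_add, map_mul]

theorem vec_zero {T I J : Type} [AddCommGroup T] :
    (vec 0 : Model T I J) = 1 := by
  unfold vec; rw [ofAdd_zero, map_one]

theorem vec_zsmul {T I J : Type} [AddCommGroup T] (n : ℤ) (v : I → FR T) :
    (vec (n • v) : Model T I J) = vec v ^ n := by
  unfold vec; rw [ofAdd_zsmul, map_zpow]

theorem vec_neg {T I J : Type} [AddCommGroup T] (v : I → FR T) :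
    (vec (-v) : Model T I J) = (vec v)⁻¹ := by
  unfold vec; rw [ofAdd_neg, map_inv]

theorem vec_inj {T I J : Type} [AddCommGroup T] {v w : I → FR T}
    (h : (vec v : Model T I J) = vec w) : v = w :=
  Multiplicative.ofAdd.injective (SemidirectProduct.inl_injective h)

theorem vec_conj {T I J : Type} [AddCommGroup T] (q : QG T J) (v : I → FR T) :
    (SemidirectProduct.inr q * vec v * (SemidirectProduct.inr q)⁻¹ : Model T I J) =
      vec ((q.1 : FR T) • v) := by
  unfold vec; rw [← map_inv, ← SemidirectProduct.inl_aut, mAct_apply]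

theorem vec_comm {T I J : Type} [AddCommGroup T] (v w : I → FR T) :
    (vec v * vec w : Model T I J) = vec w * vec v := by
  rw [← vec_add, ← vec_add, add_comm]

theorem metab_semidirect {N Q : Type*} [CommGroup N] [CommGroup Q] (f : Q →* MulAut N) :
    IsMetabelian (SemidirectProduct N Q f) := by
  intro a b ha hb
  have key : ∀ x ∈ commutator (SemidirectProduct N Q f), x.right = 1 := by
    intro x hx
    have := Abelianization.commutator_subset_ker (SemidirectProduct.rightHom : SemidirectProduct N Q f →* Q) hx
    exact this
  have h1 := key a ha
  have h2 := key b hb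
  ext
  · simp [h1, h2, mul_comm]
  · simp [h1, h2]

theorem IsMetabelian.of_injective {G K : Type*} [Group G] [Group K] (hK : IsMetabelian K)
    (f : G →* K) (hf : Function.Injective f) : IsMetabelian G := by
  intro a b ha hb
  apply hf
  have key : ∀ x ∈ commutator G, f x ∈ commutator K := by
    intro x hx
    have h1 := Subgroup.map_commutator (⊤ : Subgroup G) ⊤ f
    have h2 : f x ∈ Subgroup.map f (commutator G) := ⟨x, hx, rfl⟩
    rw [commutator_def, h1] at h2
    exact Subgroup.commutator_mono le_top le_top h2
  rw [map_mul, map_mul]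
  exact hK _ _ (key a ha) (key b hb)

end ModelDef

section ModelHom

variable {I J : Type} [Fintype J] [DecidableEq J] [DecidableEq I] (m : J → ℕ)

/-- The torsion-and-free abelian group. -/
abbrev TP (m : J → ℕ) := (j : J) → ZMod (m j)

/-- generators in the acting group -/
noncomputable def qel (m : J → ℕ) : J ⊕ J → QG (TP m) J
  | Sum.inl j => (ofU _ (Multiplicative.ofAdd (Pi.single j 1)),
      Multiplicative.ofAdd (Pi.single j 1), 1)
  | Sum.inr j => (felU (Pi.single j 1), 1, Multiplicative.ofAdd (Pi.single j 1))

/-- The representation of the free group in the model. -/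
noncomputable def phi (I : Type) [DecidableEq I] (m : J → ℕ) :
    FreeGroup (I ⊕ (J ⊕ J)) →* Model (TP m) I J :=
  FreeGroup.lift (Sum.elim (fun i => vec (Pi.single i 1))
    (fun y => SemidirectProduct.inr (qel m y)))

/-- generators -/
def ga (I J : Type) (i : I) : FreeGroup (I ⊕ (J ⊕ J)) := FreeGroup.of (Sum.inl i)

/-- generators -/
def gq (I J : Type) (y : J ⊕ J) : FreeGroup (I ⊕ (J ⊕ J)) := FreeGroup.of (Sum.inr y)

theorem phi_a (i : I) : phi I m (ga I J i) = vec (Pi.single i 1) := by simp [phi, ga]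

theorem phi_q (y : J ⊕ J) : phi I m (gq I J y) = SemidirectProduct.inr (qel m y) := by
  simp [phi, gq]

theorem phi_nf (e : J ⊕ J → ℤ) : phi I m (nf (gq I J) e) =
    SemidirectProduct.inr (∏ y, qel m y ^ e y) := by
  rw [nf_map]
  simp only [phi_q]
  rw [← nf_map (SemidirectProduct.inr : QG (TP m) J →* _) (qel m) e, nf_comm]

theorem prod_snd (e : J ⊕ J → ℤ) : (∏ y, qel m y ^ e y).2 =
    (Multiplicative.ofAdd (fun j => (e (Sum.inl j) : ZMod (m j))),
      Multiplicative.ofAdd (fun j => e (Sum.inr j))) := by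
  rw [Prod.snd_prod, Fintype.prod_sum_type]
  simp only [qel]
  refine Prod.ext ?_ ?_
  · apply Multiplicative.toAdd.injective
    simp [Prod.fst_prod, toAdd_prod]
    ext j
    rw [Finset.sum_apply, Finset.sum_eq_single j]
    · simp
    · intro b _ hb
      simp [Pi.single_eq_of_ne hb.symm]
    · simp
  · apply Multiplicative.toAdd.injective
    simp [Prod.snd_prod, toAdd_prod]
    ext j
    simp [Finset.sum_apply, Pi.single_apply]

theorem prod_fst (e : J ⊕ J → ℤ) (he : SOnly e) : (∏ y, qel m y ^ e y).1 =
    ofU _ (Multiplicative.ofAdd (fun j => (e (Sum.inl j) : ZMod (m j)))) := by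
  have h := congrArg Prod.fst (prod_snd m e)
  simp only at h
  rw [← h, Prod.snd_prod, Prod.fst_prod, Prod.fst_prod, map_prod]
  rw [Fintype.prod_sum_type, Fintype.prod_sum_type]
  simp only [he _, zpow_zero, Finset.prod_const_one, mul_one, Prod.fst_one, Prod.snd_one, map_one]
  refine Finset.prod_congr rfl fun j _ => ?_
  simp [qel, Prod.pow_fst, Prod.pow_snd]

theorem phi_rels [Fintype I] : ∀ r ∈ relsOf (ga I J) (gq I J) m, phi I m r = 1 := by
  refine relsOf_map (phi I m) (fun x => x = 1) ?_ ?_ ?_ ?_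
  · intro x y
    rw [phi_q, phi_q, ← map_mul, ← map_mul, mul_comm, mul_inv_cancel]
  · intro j
    rw [phi_q, ← map_pow]
    have : qel m (Sum.inl j) ^ m j = 1 := by
      have h0 : (Multiplicative.ofAdd (Pi.single j 1 : TP m)) ^ m j = 1 := by
        rw [← ofAdd_nsmul, ← Pi.single_smul]
        simp
      simp only [qel, Prod.pow_mk, ← map_pow, h0]
      simp
    rw [this, map_one]
  · intro i j
    rw [mul_inv_eq_one, phi_q, phi_q, phi_a, vec_conj, vec_conj]
    have h := vec_conj (qel m (Sum.inl j))⁻¹ (Pi.single i 1 : I → FR (TP m))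
    rw [map_inv, inv_inv] at h
    rw [h, ← vec_neg]
    simp only [pow_succ, pow_zero, one_mul, ← vec_add]
    congr 1
    funext k
    simp only [qel, felU_val, Prod.fst_inv, Pi.add_apply, Pi.smul_apply, Pi.neg_apply, smul_eq_mul]
    ring
  · intro i l e
    simp only [phi_q, phi_a]
    rw [← nf_map (SemidirectProduct.inr : QG (TP m) J →* _) (qel m) e, vec_conj, vec_comm,
      mul_inv_cancel]

theorem phi_av (i : I) (e : J ⊕ J → ℤ) : phi I m (av (ga I J) (gq I J) i e) =
    vec (((∏ y, qel m y ^ e y).1 : FR (TP m)) • Pi.single i 1) := by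
  unfold av
  rw [map_mul, map_mul, map_inv, phi_nf, phi_a, vec_conj]

theorem phi_evl (L : List (ℤˣ × I × (J ⊕ J → ℤ))) : phi I m (evl (ga I J) (gq I J) L) =
    vec (L.map fun x => (x.1 : ℤ) • ((∏ y, qel m y ^ x.2.2 y).1 : FR (TP m)) •
      (Pi.single x.2.1 1 : I → FR (TP m))).sum := by
  induction L with
  | nil => simp [evl_nil, vec_zero]
  | cons x L ih =>
    rw [evl_cons, map_mul, ih, List.map_cons, List.sum_cons, vec_add]
    unfold ev
    rw [map_zpow, phi_av, vec_zsmul]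

theorem phi_h1 (L : List (ℤˣ × I × (J ⊕ J → ℤ))) (e : J ⊕ J → ℤ)
    (h : phi I m (evl (ga I J) (gq I J) L * nf (gq I J) e) = 1) :
    SOnly e ∧ ∀ j, (e (Sum.inl j) : ZMod (m j)) = 0 := by
  rw [map_mul, phi_evl, phi_nf] at h
  have h2 := congrArg (fun x => x.right.2) h
  simp only [vec, SemidirectProduct.mul_right, SemidirectProduct.right_inl, one_mul,
    SemidirectProduct.right_inr, prod_snd, SemidirectProduct.one_right, Prod.snd_one] at h2
  have h3 := congrArg Prod.fst h2
  have h4 := congrArg Prod.snd h2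
  exact ⟨fun j => congrFun (Multiplicative.ofAdd.injective h4) j,
    fun j => congrFun (Multiplicative.ofAdd.injective h3) j⟩

theorem phi_h2 (L : List (ℤˣ × I × (J ⊕ J → ℤ))) (hL : ∀ x ∈ L, SOnly x.2.2)
    (h : phi I m (evl (ga I J) (gq I J) L) = 1) (i : I) (θ : TP m) :
    (L.map fun x => if (x.2.1, fun j => (x.2.2 (Sum.inl j) : ZMod (m j))) = (i, θ)
      then (x.1 : ℤ) else 0).sum = 0 := by
  rw [phi_evl, ← vec_zero] at h
  have h' := congrFun (vec_inj h) i
  clear h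
  have key : ∀ L : List (ℤˣ × I × (J ⊕ J → ℤ)), (∀ x ∈ L, SOnly x.2.2) →
      (L.map fun x => (x.1 : ℤ) • ((∏ y, qel m y ^ x.2.2 y).1 : FR (TP m)) •
        (Pi.single x.2.1 1 : I → FR (TP m))).sum i =
      algebraMap (AddMonoidAlgebra ℤ (TP m)) (FR (TP m)) (L.map fun x =>
        if x.2.1 = i then AddMonoidAlgebra.single
          (fun j => (x.2.2 (Sum.inl j) : ZMod (m j))) (x.1 : ℤ) else 0).sum := by
    intro L hL
    induction L with
    | nil => simp
    | cons x L ih =>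
      rw [List.map_cons, List.map_cons, List.sum_cons, List.sum_cons, Pi.add_apply, map_add,
        ih fun y hy => hL y (by simp [hy]), prod_fst m _ (hL x (by simp)), ofU_val]
      congr 1
      by_cases hi : x.2.1 = i
      · subst hi
        simp only [Pi.smul_apply, Pi.single_eq_same, if_true, smul_eq_mul, mul_one, ← map_zsmul,
          AddMonoidAlgebra.smul_single]
        rfl
      · simp [hi, Pi.single_apply, Ne.symm hi]
  rw [key L hL, Pi.zero_apply, ← map_zero (algebraMap (AddMonoidAlgebra ℤ (TP m)) (FR (TP m)))] at h'
  have h := IsFractionRing.injective (AddMonoidAlgebra ℤ (TP m)) (FR (TP m)) h'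
  have h5 := congrArg (fun y => AddMonoidAlgebra.coeff y θ) h
  simp only [AddMonoidAlgebra.coeff_zero, Finsupp.zero_apply] at h5
  refine Eq.trans ?_ h5
  clear h5 h h' key hL
  induction L with
  | nil => simp
  | cons x L ih =>
    rw [List.map_cons, List.map_cons, List.sum_cons, List.sum_cons, ih,
      AddMonoidAlgebra.coeff_add, Finsupp.add_apply]
    congr 1
    by_cases hi : x.2.1 = i
    · simp [hi, Finsupp.single_apply]
    · simp [hi]

end ModelHom

section UpperBound

variable {I J : Type} [Fintype J] [DecidableEq J] [DecidableEq I] [Fintype I] (m : J → ℕ)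

/-- The relators of the concrete presentation. -/
def rels (I : Type) (m : J → ℕ) : Set (FreeGroup (I ⊕ (J ⊕ J))) := relsOf (ga I J) (gq I J) m

theorem word_eq {X : Type*} [DecidableEq X] {G : Type*} [Group G] (w : FreeGroup X) (f : X → G) :
    FreeGroup.lift f w = (w.toWord.map fun x => cond x.2 (f x.1) (f x.1)⁻¹).prod := by
  conv_lhs => rw [← FreeGroup.mk_toWord (x := w)]
  rw [FreeGroup.lift_mk]

theorem word_eq' (w : FreeGroup (I ⊕ (J ⊕ J))) :
    w = (w.toWord.map (letterVal (ga I J) (gq I J))).prod := by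
  have h := word_eq w (FreeGroup.of)
  have h2 : FreeGroup.lift (FreeGroup.of : I ⊕ (J ⊕ J) → _) w = w := by
    have : FreeGroup.lift (FreeGroup.of : I ⊕ (J ⊕ J) → _) = MonoidHom.id _ := by
      ext x; simp
    rw [this]; rfl
  rw [h2] at h
  conv_lhs => rw [h]
  congr 1
  apply List.map_congr_left
  rintro ⟨x, b⟩ -
  rcases x with x | x <;> rfl

theorem upper (w : FreeGroup (I ⊕ (J ⊕ J))) (hw : phi I m w = 1) :
    AreaLe (rels I m) w (totCost (Fintype.card J) w.toWord.length) := by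
  have h := (relsOf_bdata (ga I J) (gq I J) m).upper (phi I m) (phi_rels m) (phi_h1 m) (phi_h2 m)
    w.toWord (by rw [← word_eq']; exact hw)
  rw [← word_eq'] at h
  exact h

theorem ker_phi : (phi I m).ker = Subgroup.normalClosure (rels I m) := by
  apply le_antisymm
  · intro w hw
    exact (upper m w hw).mem_normalClosure
  · refine Subgroup.normalClosure_le_normal ?_
    intro r hr
    exact phi_rels m r hr

/-- The induced injection of the finitely presented group into the model. -/
noncomputable def phiBar (I : Type) [DecidableEq I] [Fintype I] (m : J → ℕ) :
    FreeGroup (I ⊕ (J ⊕ J)) ⧸ Subgroup.normalClosure (rels I m) →* Model (TP m) I J :=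
  QuotientGroup.lift _ (phi I m) (by intro w hw; rw [← ker_phi] at hw; exact hw)

theorem phiBar_mk (w : FreeGroup (I ⊕ (J ⊕ J))) : phiBar I m (QuotientGroup.mk w) = phi I m w := rfl

theorem phiBar_inj : Function.Injective (phiBar I m) := by
  rw [injective_iff_map_eq_one]
  intro x
  obtain ⟨w, rfl⟩ := QuotientGroup.mk_surjective x
  intro h
  rw [phiBar_mk] at h
  rw [QuotientGroup.eq_one_iff, ← ker_phi]
  exact h

theorem rels_metab :
    IsMetabelian (FreeGroup (I ⊕ (J ⊕ J)) ⧸ Subgroup.normalClosure (rels I m)) :=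
  (metab_semidirect _).of_injective (phiBar I m) (phiBar_inj m)

theorem freeNorm_eq {X : Type*} [DecidableEq X] (w : FreeGroup X) :
    freeNorm w = w.toWord.length := by
  unfold freeNorm
  congr!

theorem upper_norm (w : FreeGroup (I ⊕ (J ⊕ J))) (hw : w ∈ Subgroup.normalClosure (rels I m)) :
    AreaLe (rels I m) w (300 * 2 ^ (20 * (Fintype.card J + 1) * freeNorm w)) := by
  rw [← ker_phi] at hw
  refine (upper m w hw).mono ?_
  rw [freeNorm_eq]
  exact totCost_le _ _

theorem exists_dehn : ∃ δ : ℕ → ℕ, IsDehnFunctionOf (rels I m) δ ∧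
    Dominates δ (fun n => 2 ^ n) := by
  have hne : ∀ n, 300 * 2 ^ (20 * (Fintype.card J + 1) * n) ∈
      {N | ∀ w ∈ Subgroup.normalClosure (rels I m), freeNorm w ≤ n → AreaLe (rels I m) w N} := by
    intro n w hw hn
    refine (upper_norm m w hw).mono ?_
    refine Nat.mul_le_mul_left _ (Nat.pow_le_pow_right (by norm_num) (Nat.mul_le_mul_left _ hn))
  refine ⟨fun n => sInf {N | ∀ w ∈ Subgroup.normalClosure (rels I m), freeNorm w ≤ n →
    AreaLe (rels I m) w N}, ?_, 300 * (Fintype.card J + 1), by positivity, ?_⟩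
  · intro n
    exact ⟨Nat.sInf_mem ⟨_, hne n⟩, fun N hN => Nat.sInf_le hN⟩
  · intro n
    refine (Nat.sInf_le (hne n)).trans ?_
    have h1 : 2 ^ (20 * (Fintype.card J + 1) * n) ≤ 2 ^ (300 * (Fintype.card J + 1) * n) :=
      Nat.pow_le_pow_right (by norm_num) (by gcongr; norm_num)
    have h2 : 300 * 2 ^ (20 * (Fintype.card J + 1) * n) ≤
        300 * (Fintype.card J + 1) * 2 ^ (300 * (Fintype.card J + 1) * n) :=
      Nat.mul_le_mul (by omega) h1
    simp only
    omega

end UpperBound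

section Embedding

variable {I J : Type} [Fintype J] [DecidableEq J] [DecidableEq I] [Fintype I] (m : J → ℕ)
variable {A T : Type} [AddCommGroup A] [CommGroup T]

/-- The map of the base group. -/
noncomputable def baseZ (I : Type) (α : A →+ (I → ℤ)) (τ : T →* Multiplicative (TP m)) :
    (T →₀ A) →+ (I → AddMonoidAlgebra ℤ (TP m)) :=
  Finsupp.liftAddHom fun t =>
    { toFun := fun a i => AddMonoidAlgebra.single (τ t).toAdd (α a i)
      map_zero' := by ext1 i; simp
      map_add' := by intro x y; ext1 i; simp [AddMonoidAlgebra.single_add] }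

theorem baseZ_single (α : A →+ (I → ℤ)) (τ : T →* Multiplicative (TP m)) (t : T) (x : A) (i : I) :
    baseZ m I α τ (Finsupp.single t x) i = AddMonoidAlgebra.single (τ t).toAdd (α x i) := by
  unfold baseZ
  rw [Finsupp.liftAddHom_apply_single]
  rfl

theorem baseZ_coeff (α : A →+ (I → ℤ)) (τ : T →* Multiplicative (TP m))
    (hτ : Function.Injective τ) (f : T →₀ A) (t : T) (i : I) :
    (baseZ m I α τ f i).coeff (τ t).toAdd = α (f t) i := by
  induction f using Finsupp.induction_linear with
  | zero => simp
  | add f g hf hg => simp [hf, hg]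
  | single s x =>
    rw [baseZ_single, AddMonoidAlgebra.coeff_single]
    classical
    by_cases h : s = t
    · subst h; simp
    · rw [Finsupp.single_eq_of_ne, Finsupp.single_eq_of_ne (Ne.symm h)]
      · simp
      · intro h2; exact h (hτ (Multiplicative.toAdd.injective h2.symm))

/-- The map of the base group into vectors. -/
noncomputable def baseF (I : Type) (α : A →+ (I → ℤ)) (τ : T →* Multiplicative (TP m)) :
    (T →₀ A) →+ (I → FR (TP m)) where
  toFun f i := algebraMap _ _ (baseZ m I α τ f i)
  map_zero' := by ext1 i; simp
  map_add' := by intro x y; ext1 i; simp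

theorem baseF_inj (α : A →+ (I → ℤ)) (τ : T →* Multiplicative (TP m))
    (hα : Function.Injective α) (hτ : Function.Injective τ) :
    Function.Injective (baseF m I α τ) := by
  rw [injective_iff_map_eq_zero]
  intro f hf
  ext t
  apply hα
  rw [Finsupp.zero_apply, map_zero]
  ext i
  rw [← baseZ_coeff m α τ hτ]
  have h := congrFun hf i
  have h2 : baseZ m I α τ f i = 0 := by
    apply IsFractionRing.injective (AddMonoidAlgebra ℤ (TP m)) (FR (TP m))
    rw [map_zero]; exact h
  rw [h2]; simp

/-- The torsion-free part of the acting group. -/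
noncomputable def sig (m : J → ℕ) : Multiplicative (TP m) →* QG (TP m) J :=
  (ofU (TP m)).prod ((MonoidHom.id _).prod 1)

theorem baseF_shift (α : A →+ (I → ℤ)) (τ : T →* Multiplicative (TP m)) (t : T) (f : T →₀ A) :
    baseF m I α τ (wreathShift t f) = (ofU (TP m) (τ t) : FR (TP m)) • baseF m I α τ f := by
  induction f using Finsupp.induction_linear with
  | zero => simp
  | add f g hf hg => simp only [map_add, hf, hg, smul_add]
  | single s x =>
    have : wreathShift t (Finsupp.single s x) = Finsupp.single (t * s) x := by
      simp [wreathShift]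
    rw [this]
    ext1 i
    show algebraMap _ (FR (TP m)) (baseZ m I α τ _ i) =
      (ofU (TP m) (τ t) : FR (TP m)) * algebraMap _ _ (baseZ m I α τ _ i)
    rw [baseZ_single, baseZ_single, ofU_val, ← map_mul, AddMonoidAlgebra.single_mul_single, map_mul,
      toAdd_mul, one_mul]

/-- The embedding of the wreath product in the model. -/
noncomputable def wemb (I : Type) [DecidableEq I] [Fintype I] (α : A →+ (I → ℤ)) (τ : T →* Multiplicative (TP m)) :
    WreathProduct A T →* Model (TP m) I J :=
  SemidirectProduct.map (AddMonoidHom.toMultiplicative (baseF m I α τ)) ((sig m).comp τ) (by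
    intro t
    refine MonoidHom.ext fun f => ?_
    exact congrArg Multiplicative.ofAdd (baseF_shift m α τ t f.toAdd))

theorem wemb_inj (α : A →+ (I → ℤ)) (τ : T →* Multiplicative (TP m))
    (hα : Function.Injective α) (hτ : Function.Injective τ) :
    Function.Injective (wemb m I α τ) := by
  intro x y h
  ext1
  · have := congrArg SemidirectProduct.left h
    simp only [wemb, SemidirectProduct.map_left] at this
    exact baseF_inj m α τ hα hτ this
  · have := congrArg (fun z => z.right.2.1) h
    simp only [wemb, SemidirectProduct.map_right] at this
    exact hτ this

theorem sig_mem (s : Multiplicative (TP m)) :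
    (SemidirectProduct.inr (sig m s) : Model (TP m) I J) ∈ (phi I m).range := by
  choose n hn using fun j => ZMod.intCast_surjective (s.toAdd j)
  refine ⟨nf (gq I J) (Sum.elim n 0), ?_⟩
  rw [phi_nf]
  congr 1
  have h1 := prod_snd m (Sum.elim n 0)
  have h2 := prod_fst m (Sum.elim n 0) (fun j => rfl)
  simp only [Sum.elim_inl, Sum.elim_inr, hn] at h1 h2
  exact Prod.ext h2 h1

theorem vec_mem (s : Multiplicative (TP m)) (i : I) (c : ℤ) :
    (vec (Pi.single i (algebraMap _ _ (AddMonoidAlgebra.single s.toAdd c)) : I → FR (TP m)) :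
      Model (TP m) I J) ∈ (phi I m).range := by
  have h1 : (vec (((sig m s).1 : FR (TP m)) • Pi.single i 1) : Model (TP m) I J) ∈
      (phi I m).range := by
    rw [← vec_conj]
    exact mul_mem (mul_mem (sig_mem m s) ⟨_, phi_a m i⟩) (inv_mem (sig_mem m s))
  have h2 := zpow_mem h1 c
  rw [← vec_zsmul] at h2
  convert h2 using 2
  have h3 : ((sig m s).1 : FR (TP m)) =
    algebraMap (AddMonoidAlgebra ℤ (TP m)) (FR (TP m)) (AddMonoidAlgebra.single s.toAdd 1) := rfl
  rw [h3]
  funext k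
  by_cases hk : k = i
  · subst hk
    simp only [Pi.smul_apply, Pi.single_eq_same, smul_eq_mul, mul_one, zsmul_eq_mul]
    rw [← map_intCast (algebraMap (AddMonoidAlgebra ℤ (TP m)) (FR (TP m))), ← map_mul]
    congr 1
    rw [← zsmul_eq_mul, AddMonoidAlgebra.smul_single, smul_eq_mul, mul_one]
  · simp [Pi.single_eq_of_ne hk]

theorem wemb_range (α : A →+ (I → ℤ)) (τ : T →* Multiplicative (TP m)) (x : WreathProduct A T) :
    wemb m I α τ x ∈ (phi I m).range := by
  have h1 : ∀ f : T →₀ A, (vec (baseF m I α τ f) : Model (TP m) I J) ∈ (phi I m).range := by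
    intro f
    induction f using Finsupp.induction_linear with
    | zero => rw [map_zero, vec_zero]; exact one_mem _
    | add f g hf hg => rw [map_add, vec_add]; exact mul_mem hf hg
    | single s a =>
      rw [← Finset.univ_sum_single (baseF m I α τ (Finsupp.single s a))]
      have : ∀ F : Finset I, (vec (∑ i ∈ F, Pi.single i (baseF m I α τ (Finsupp.single s a) i)) :
          Model (TP m) I J) ∈ (phi I m).range := by
        intro F
        induction F using Finset.induction_on with
        | empty => rw [Finset.sum_empty, vec_zero]; exact one_mem _
        | insert i F hi ih =>
          rw [Finset.sum_insert hi, vec_add]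
          refine mul_mem ?_ ih
          have : baseF m I α τ (Finsupp.single s a) i =
            algebraMap _ _ (baseZ m I α τ (Finsupp.single s a) i) := rfl
          rw [this, baseZ_single]
          exact vec_mem m (τ s) i _
      exact this _
  rw [← SemidirectProduct.inl_left_mul_inr_right x, map_mul]
  refine mul_mem ?_ ?_
  · have := h1 x.left.toAdd
    convert this using 1
    simp only [wemb, SemidirectProduct.map_inl]; rfl
  · have := sig_mem (I := I) m (τ x.right)
    convert this using 1
    simp only [wemb, SemidirectProduct.map_inr]; rfl

theorem exists_emb (α : A →+ (I → ℤ)) (τ : T →* Multiplicative (TP m))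
    (hα : Function.Injective α) (hτ : Function.Injective τ) :
    ∃ ι : WreathProduct A T →* FreeGroup (I ⊕ (J ⊕ J)) ⧸ Subgroup.normalClosure (rels I m),
      Function.Injective ι := by
  let e := MonoidHom.ofInjective (phiBar_inj (I := I) m)
  have hr : ∀ x, wemb m I α τ x ∈ (phiBar I m).range := by
    intro x
    obtain ⟨w, hw⟩ := wemb_range m α τ x
    exact ⟨QuotientGroup.mk w, hw⟩
  refine ⟨e.symm.toMonoidHom.comp ((wemb m I α τ).codRestrict _ hr), ?_⟩
  intro x y h
  have h2 := e.symm.injective h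
  exact wemb_inj m α τ hα hτ (congrArg Subtype.val h2)

end Embedding

section Heisenberg

/-- The integral Heisenberg group. -/
@[ext] structure Heis where
  z : ℤ
  x : ℤ
  y : ℤ

namespace Heis

instance : Mul Heis := ⟨fun a b => ⟨a.z + b.z + (a.x * b.y - a.y * b.x), a.x + b.x, a.y + b.y⟩⟩
instance : One Heis := ⟨⟨0, 0, 0⟩⟩
instance : Inv Heis := ⟨fun a => ⟨-a.z, -a.x, -a.y⟩⟩

theorem mul_z (a b : Heis) : (a * b).z = a.z + b.z + (a.x * b.y - a.y * b.x) := rfl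
theorem mul_x (a b : Heis) : (a * b).x = a.x + b.x := rfl
theorem mul_y (a b : Heis) : (a * b).y = a.y + b.y := rfl
theorem one_z : (1 : Heis).z = 0 := rfl
theorem one_x : (1 : Heis).x = 0 := rfl
theorem one_y : (1 : Heis).y = 0 := rfl
theorem inv_z (a : Heis) : (a⁻¹).z = -a.z := rfl
theorem inv_x (a : Heis) : (a⁻¹).x = -a.x := rfl
theorem inv_y (a : Heis) : (a⁻¹).y = -a.y := rfl

instance : Group Heis := Group.ofLeftAxioms
  (by intro a b c; ext <;> simp only [mul_z, mul_x, mul_y] <;> ring)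
  (by intro a; ext <;> simp only [mul_z, mul_x, mul_y, one_z, one_x, one_y] <;> ring)
  (by intro a; ext <;> simp only [mul_z, mul_x, mul_y, one_z, one_x, one_y, inv_z, inv_x, inv_y] <;>
        ring)

/-- The hyperbolic automorphism. -/
def S : MulAut Heis where
  toFun a := ⟨a.z, 2 * a.x + 3 * a.y, a.x + 2 * a.y⟩
  invFun a := ⟨a.z, 2 * a.x - 3 * a.y, - a.x + 2 * a.y⟩
  left_inv a := by ext <;> simp only <;> ring
  right_inv a := by ext <;> simp only <;> ring
  map_mul' a b := by ext <;> simp only [mul_z, mul_x, mul_y] <;> ring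

/-- The central involution. -/
def Nn : MulAut Heis where
  toFun a := ⟨a.z, -a.x, -a.y⟩
  invFun a := ⟨a.z, -a.x, -a.y⟩
  left_inv a := by ext <;> simp only <;> ring
  right_inv a := by ext <;> simp only <;> ring
  map_mul' a b := by ext <;> simp only [mul_z, mul_x, mul_y] <;> ring

theorem S_apply (a : Heis) : S a = ⟨a.z, 2 * a.x + 3 * a.y, a.x + 2 * a.y⟩ := rfl
theorem S_symm_apply (a : Heis) : (MulEquiv.symm S) a = ⟨a.z, 2 * a.x - 3 * a.y, - a.x + 2 * a.y⟩ := rfl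
theorem N_apply (a : Heis) : Nn a = ⟨a.z, -a.x, -a.y⟩ := rfl

theorem S_N : S * Nn = Nn * S := by
  refine MulEquiv.ext fun a => ?_
  simp only [MulAut.mul_apply, S_apply, N_apply]
  ext <;> simp only <;> ring

/-- The base vector. -/
def b0 : Heis := ⟨0, 1, 0⟩

theorem S_pow (n : ℕ) : ((S ^ n) b0).z = 0 ∧ (2 : ℤ) ^ n ≤ ((S ^ n) b0).x ∧ 0 ≤ ((S ^ n) b0).y ∧
    (2 : ℤ) ^ n ≤ 2 * ((S ^ n) b0).y + 1 := by
  induction n with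
  | zero => simp [b0]
  | succ n ih =>
    obtain ⟨h1, h2, h3, h4⟩ := ih
    rw [pow_succ', MulAut.mul_apply, S_apply]
    have : (0 : ℤ) < 2 ^ n := by positivity
    refine ⟨h1, ?_, ?_, ?_⟩
    · simp only; rw [pow_succ]; linarith
    · simp only; linarith
    · simp only; rw [pow_succ]; linarith

end Heis

/-- The ambient group for the lower bound. -/
abbrev Gam := SemidirectProduct Heis (MulAut Heis) (MonoidHom.id _)

/-- Central elements. -/
def zc (k : ℤ) : Gam := SemidirectProduct.inl ⟨k, 0, 0⟩

theorem zc_mul (k l : ℤ) : zc k * zc l = zc (k + l) := by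
  unfold zc
  rw [← map_mul]; congr 1
  ext <;> simp [Heis.mul_z, Heis.mul_x, Heis.mul_y]

theorem zc_zero : zc 0 = 1 := by
  unfold zc; rw [show (⟨0, 0, 0⟩ : Heis) = 1 from rfl, map_one]

theorem zc_inv (k : ℤ) : (zc k)⁻¹ = zc (-k) := by
  rw [inv_eq_iff_mul_eq_one, zc_mul, add_neg_cancel, zc_zero]

theorem zc_inj {k l : ℤ} (h : zc k = zc l) : k = l :=
  congrArg Heis.z (SemidirectProduct.inl_injective h)

theorem heis_comm (a b : Heis) :
    (SemidirectProduct.inl a * SemidirectProduct.inl b *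
      (SemidirectProduct.inl b * SemidirectProduct.inl a)⁻¹ : Gam) =
      zc (2 * (a.x * b.y - a.y * b.x)) := by
  unfold zc
  rw [← map_mul, ← map_mul, ← map_inv, ← map_mul]; congr 1
  ext <;> simp [Heis.mul_z, Heis.mul_x, Heis.mul_y, Heis.inv_z, Heis.inv_x, Heis.inv_y] <;> ring

theorem heis_conj (s : MulAut Heis) (a : Heis) :
    (SemidirectProduct.inr s * SemidirectProduct.inl a * (SemidirectProduct.inr s)⁻¹ : Gam) =
      SemidirectProduct.inl (s a) := by
  rw [← map_inv, ← SemidirectProduct.inl_aut]; rfl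

variable {I J : Type} [Fintype J] [DecidableEq J] [DecidableEq I] [Fintype I] (m : J → ℕ)

/-- Images of the acting letters. -/
def hq (j0 : J) : J ⊕ J → MulAut Heis
  | Sum.inl j => if j = j0 then Heis.S else 1
  | Sum.inr j => if j = j0 then 1 else Heis.Nn

/-- The representation for the lower bound. -/
def psi (I : Type) (j0 : J) : FreeGroup (I ⊕ (J ⊕ J)) →* Gam :=
  FreeGroup.lift (Sum.elim (fun _ => SemidirectProduct.inl Heis.b0)
    (fun y => SemidirectProduct.inr (hq j0 y)))

theorem psi_a (j0 : J) (i : I) : psi I j0 (ga I J i) = SemidirectProduct.inl Heis.b0 := by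
  simp [psi, ga]

theorem psi_q (j0 : J) (y : J ⊕ J) : psi I j0 (gq I J y) = SemidirectProduct.inr (hq j0 y) := by
  simp [psi, gq]

theorem hq_comm (j0 : J) (x y : J ⊕ J) : hq j0 x * hq j0 y = hq j0 y * hq j0 x := by
  rcases x with x | x <;> rcases y with y | y <;> simp only [hq] <;> split_ifs <;>
    simp [Heis.S_N]

theorem psi_rels (j0 : J) (h0 : m j0 = 0) : ∀ r ∈ rels I m, ∃ k, psi I j0 r = zc k := by
  refine relsOf_map (psi I j0) (fun γ => ∃ k, γ = zc k) ?_ ?_ ?_ ?_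
  · intro x y
    refine ⟨0, ?_⟩
    rw [zc_zero, psi_q, psi_q, ← map_mul, ← map_mul, hq_comm, mul_inv_cancel]
  · intro j
    refine ⟨0, ?_⟩
    rw [zc_zero, psi_q, ← map_pow]
    by_cases hj : j = j0
    · subst hj; rw [h0, pow_zero, map_one]
    · simp [hq, hj]
  · intro i j
    have h := heis_conj (hq j0 (Sum.inl j))⁻¹ Heis.b0
    rw [map_inv, inv_inv] at h
    rw [psi_a, psi_q, psi_q, heis_conj, heis_conj, h, ← map_inv, ← map_pow, ← map_mul, ← map_mul,
      ← map_inv, ← map_mul]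
    have : ∀ u : Heis, u.x = 0 → u.y = 0 → ∃ k, (SemidirectProduct.inl u : Gam) = zc k := by
      intro u h1 h2
      refine ⟨u.z, ?_⟩
      unfold zc; congr 1
      ext <;> simp [h1, h2]
    by_cases hj : j = j0
    · apply this <;> simp [hq, hj, Heis.S_apply, Heis.S_symm_apply, Heis.mul_x, Heis.mul_y,
        Heis.inv_x, Heis.inv_y, Heis.b0, pow_succ]
    · apply this <;> simp [hq, hj, Heis.N_apply, Heis.mul_x, Heis.mul_y,
        Heis.inv_x, Heis.inv_y, Heis.b0, pow_succ]
  · intro i l e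
    simp only [psi_q, psi_a]
    rw [← nf_map (SemidirectProduct.inr : MulAut Heis →* Gam) (hq j0) e, heis_conj]
    exact ⟨_, heis_comm _ _⟩

theorem psi_central (j0 : J) (k : ℤ) (w : FreeGroup (I ⊕ (J ⊕ J))) :
    psi I j0 w * zc k = zc k * psi I j0 w := by
  have hS : ∀ x : I ⊕ (J ⊕ J), psi I j0 (FreeGroup.of x) * zc k = zc k * psi I j0 (FreeGroup.of x) := by
    rintro (i | y)
    · have h := psi_a j0 i
      unfold ga at h
      rw [h]
      unfold zc
      rw [← map_mul, ← map_mul]; congr 1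
      ext <;> simp [Heis.mul_z, Heis.mul_x, Heis.mul_y, Heis.b0]
    · have h := psi_q (I := I) j0 y
      unfold gq at h
      rw [h, ← mul_inv_eq_iff_eq_mul]
      unfold zc
      rw [heis_conj]
      congr 1
      rcases y with y | y <;> simp only [hq] <;> split_ifs <;>
        simp [Heis.S_apply, Heis.N_apply]
  induction w using FreeGroup.induction_on with
  | C1 => simp
  | of x => exact hS x
  | inv_of x h =>
    rw [map_inv]
    have := hS x
    have h2 : Commute (psi I j0 (FreeGroup.of x)) (zc k) := this
    exact h2.inv_left
  | mul x y hx hy =>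
    have h1 : Commute (psi I j0 x) (zc k) := hx
    have h2 : Commute (psi I j0 y) (zc k) := hy
    rw [map_mul]
    exact h1.mul_left h2

theorem psi_bound (j0 : J) (h0 : m j0 = 0) : ∃ B : ℕ, ∀ w N, AreaLe (rels I m) w N → ∀ k : ℤ,
    psi I j0 w = zc k → k.natAbs ≤ B * N := by
  have hfin : (rels I m).Finite := relsOf_finite _ _ _
  choose! f hf using psi_rels (I := I) m j0 h0
  obtain ⟨B, hB⟩ := (hfin.image fun r => (f r).natAbs).bddAbove
  refine ⟨B, ?_⟩
  intro w N h
  obtain ⟨N', hN, l, hl, hl2⟩ := AreaLe.induct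
    (P := fun w N => ∃ l : ℤ, psi I j0 w = zc l ∧ l.natAbs ≤ B * N)
    ⟨0, by rw [zc_zero, map_one], by simp⟩ (by
      rintro x r w N hr ⟨l, h1, h2⟩
      have : ∃ k : ℤ, psi I j0 r = zc k ∧ k.natAbs ≤ B := by
        rcases hr with hr | hr
        · exact ⟨f r, hf r hr, hB ⟨r, hr, rfl⟩⟩
        · refine ⟨-f r⁻¹, ?_, ?_⟩
          · have := hf _ hr
            rw [map_inv] at this
            rw [← inv_inv (psi I j0 r), this, zc_inv]
          · rw [Int.natAbs_neg]; exact hB ⟨r⁻¹, hr, rfl⟩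
      obtain ⟨k, h3, h4⟩ := this
      refine ⟨k + l, ?_, ?_⟩
      · rw [map_mul, map_mul, map_mul, h1, h3, mul_assoc (psi I j0 x⁻¹), ← psi_central, map_inv,
          inv_mul_cancel_left, zc_mul]
      · have := Int.natAbs_add_le k l
        rw [mul_add, mul_one]; omega) h
  intro k hk
  rw [hl] at hk
  rw [← zc_inj hk]
  exact hl2.trans (Nat.mul_le_mul_left _ hN)

/-- The words with large area. -/
def wn (i0 : I) (j0 : J) (n : ℕ) : FreeGroup (I ⊕ (J ⊕ J)) :=
  ga I J i0 * (gq I J (Sum.inl j0) ^ n * ga I J i0 * (gq I J (Sum.inl j0) ^ n)⁻¹) *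
    (gq I J (Sum.inl j0) ^ n * ga I J i0 * (gq I J (Sum.inl j0) ^ n)⁻¹ * ga I J i0)⁻¹

theorem wn_mem (i0 : I) (j0 : J) (n : ℕ) : wn i0 j0 n ∈ Subgroup.normalClosure (rels I m) := by
  rw [← ker_phi, MonoidHom.mem_ker]
  unfold wn
  simp only [map_mul, map_inv, map_pow, phi_a, phi_q]
  rw [← map_pow, vec_conj, vec_comm, mul_inv_cancel]

theorem wn_psi (i0 : I) (j0 : J) (n : ℕ) :
    psi I j0 (wn i0 j0 n) = zc (2 * ((Heis.S ^ n) Heis.b0).y) := by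
  unfold wn
  simp only [map_mul, map_inv, map_pow, psi_a, psi_q]
  rw [← map_pow, heis_conj, heis_comm]
  simp [hq, Heis.b0]

theorem wn_norm (i0 : I) (j0 : J) (n : ℕ) : freeNorm (wn i0 j0 n) ≤ 4 * n + 4 := by
  rw [freeNorm_eq]
  change FreeGroup.norm _ ≤ _
  have h1 : FreeGroup.norm (gq I J (Sum.inl j0) ^ n) ≤ n := by
    induction n with
    | zero => simp
    | succ n ih =>
      rw [pow_succ]
      refine (FreeGroup.norm_mul_le _ _).trans ?_
      have : FreeGroup.norm (gq I J (Sum.inl j0)) = 1 := FreeGroup.norm_of _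
      omega
  have h2 : FreeGroup.norm (ga I J i0) = 1 := FreeGroup.norm_of _
  unfold wn
  set S := gq I J (Sum.inl j0) ^ n
  set a := ga I J i0
  have e0 := FreeGroup.norm_inv_eq (x := S)
  have e1 := FreeGroup.norm_mul_le S a
  have e2 := FreeGroup.norm_mul_le (S * a) S⁻¹
  have e3 := FreeGroup.norm_mul_le a (S * a * S⁻¹)
  have e4 := FreeGroup.norm_mul_le (S * a * S⁻¹) a
  have e5 := FreeGroup.norm_inv_eq (x := S * a * S⁻¹ * a)
  have e6 := FreeGroup.norm_mul_le (a * (S * a * S⁻¹)) (S * a * S⁻¹ * a)⁻¹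
  omega

theorem lower (i0 : I) (j0 : J) (h0 : m j0 = 0) (δ : ℕ → ℕ) (hδ : IsDehnFunctionOf (rels I m) δ) :
    Dominates (fun n => 2 ^ n) δ := by
  obtain ⟨B, hB⟩ := psi_bound (I := I) m j0 h0
  refine ⟨B + 8, by omega, ?_⟩
  intro n
  rcases Nat.eq_zero_or_pos n with rfl | hn
  · simp only [pow_zero]; omega
  have h1 := (hδ ((B + 8) * n)).1 (wn i0 j0 n) (wn_mem m i0 j0 n) (by
    refine (wn_norm i0 j0 n).trans ?_
    nlinarith)
  have h2 := hB _ _ h1 _ (wn_psi i0 j0 n)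
  obtain ⟨-, -, h3, h4⟩ := Heis.S_pow n
  have h5 : (2 : ℤ) ^ n = ((2 ^ n : ℕ) : ℤ) := by push_cast; rfl
  rw [h5] at h4
  have h6 : 2 ^ n ≤ B * δ ((B + 8) * n) + 1 := by omega
  have h7 : B * δ ((B + 8) * n) ≤ (B + 8) * δ ((B + 8) * n) := Nat.mul_le_mul_right _ (by omega)
  simp only
  omega

end Heisenberg

section PartOne

theorem part_one (A T : Type) (_ : AddCommGroup A) (_ : CommGroup T) (r : ℕ)
    (hA : Nonempty (A ≃+ (Fin r → ℤ))) (hT : Group.FG T) :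
    ∃ (X : Type) (_ : Finite X) (S : Set (FreeGroup X)) (δ : ℕ → ℕ),
        S.Finite ∧
        IsMetabelian (FreeGroup X ⧸ Subgroup.normalClosure S) ∧
        IsDehnFunctionOf S δ ∧ DehnEquiv δ (fun n => 2 ^ n) ∧
        ∃ ι : WreathProduct A T →* FreeGroup X ⧸ Subgroup.normalClosure S,
          Function.Injective ι := by
  classical
  obtain ⟨eA⟩ := hA
  obtain ⟨P, K, _, _, p, _, ex, ⟨eT⟩⟩ := CommGroup.equiv_free_prod_prod_multiplicative_zmod T
  let I := Option (Fin r)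
  let J := Option (K ⊕ P)
  let m : J → ℕ := fun o => match o with
    | none => 0
    | some (Sum.inl _) => 0
    | some (Sum.inr i) => p i ^ ex i
  let α : A →+ (I → ℤ) :=
    { toFun := fun a o => o.elim 0 (eA a)
      map_zero' := by ext o; cases o <;> simp
      map_add' := by intro x y; ext o; cases o <;> simp }
  have hα : Function.Injective α := by
    intro x y h
    apply eA.injective
    ext i
    exact congrFun h (some i)
  let τ0 : T → TP m := fun t o => match o with
    | none => (0 : ZMod 0)
    | some (Sum.inl k) => (Multiplicative.toAdd ((eT t).1 k) : ℤ)
    | some (Sum.inr i) => Multiplicative.toAdd ((eT t).2 i)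
  let τ : T →* Multiplicative (TP m) := MonoidHom.mk' (fun t => Multiplicative.ofAdd (τ0 t)) (by
    intro s t
    rw [← ofAdd_add]
    congr 1
    funext o
    rcases o with _ | k | i
    · exact (add_zero (0 : ZMod 0)).symm
    · have h : (eT (s * t)).1 k = (eT s).1 k * (eT t).1 k := by rw [map_mul]; rfl
      exact congrArg Multiplicative.toAdd h
    · have h : (eT (s * t)).2 i = (eT s).2 i * (eT t).2 i := by rw [map_mul]; rfl
      exact congrArg Multiplicative.toAdd h)
  have hτ : Function.Injective τ := by
    intro s t h
    have h1 : τ0 s = τ0 t := Multiplicative.ofAdd.injective h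
    apply eT.injective
    refine Prod.ext (funext fun k => ?_) (funext fun i => ?_)
    · exact congrFun h1 (some (Sum.inl k))
    · exact congrFun h1 (some (Sum.inr i))
  obtain ⟨δ, hδ, hup⟩ := exists_dehn (I := I) m
  exact ⟨I ⊕ (J ⊕ J), inferInstance, rels I m, δ, relsOf_finite _ _ _, rels_metab m, hδ,
    ⟨hup, lower m (none : I) (none : J) rfl δ hδ⟩, exists_emb m α τ hα hτ⟩

end PartOne

section Magnus

variable {r : ℕ}

/-- Abbreviation for the abelianized free group. -/
abbrev MT (r : ℕ) := Abelianization (FreeGroup (Fin r))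

/-- The Magnus representation. -/
noncomputable def mag (r : ℕ) : FreeGroup (Fin r) →* WreathProduct (Fin r → ℤ) (MT r) :=
  FreeGroup.lift fun i =>
    ⟨Multiplicative.ofAdd (Finsupp.single 1 (Pi.single i 1)), Abelianization.of (FreeGroup.of i)⟩

theorem mag_of (i : Fin r) : mag r (FreeGroup.of i) =
    ⟨Multiplicative.ofAdd (Finsupp.single 1 (Pi.single i 1)),
      Abelianization.of (FreeGroup.of i)⟩ := by
  simp [mag]

theorem mag_right (w : FreeGroup (Fin r)) : (mag r w).right = Abelianization.of w := by
  have : (SemidirectProduct.rightHom.comp (mag r)) = Abelianization.of := by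
    ext i
    simp [mag_of]
  exact DFunLike.congr_fun this w

/-- The flow of a word. -/
noncomputable def flow (w : FreeGroup (Fin r)) : MT r →₀ (Fin r → ℤ) := (mag r w).left.toAdd

theorem flow_mul (w v : FreeGroup (Fin r)) :
    flow (w * v) = flow w + wreathShift (Abelianization.of w) (flow v) := by
  unfold flow
  rw [map_mul, SemidirectProduct.mul_left, mag_right]
  rfl

theorem flow_one : flow (1 : FreeGroup (Fin r)) = 0 := by
  unfold flow
  rw [map_one]; rfl

theorem flow_of (i : Fin r) : flow (FreeGroup.of i) = Finsupp.single 1 (Pi.single i 1) := by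
  unfold flow
  rw [mag_of]; rfl

theorem shift_mul (q q' : MT r) (f : MT r →₀ (Fin r → ℤ)) :
    wreathShift (q * q') f = wreathShift q (wreathShift q' f) :=
  congrArg Multiplicative.toAdd
    (DFunLike.congr_fun (map_mul (wreathAction (Fin r → ℤ) (MT r)) q q') (Multiplicative.ofAdd f))

/-- A section of the abelianization. -/
noncomputable def sec (q : MT r) : FreeGroup (Fin r) := (QuotientGroup.mk_surjective q).choose

theorem sec_spec (q : MT r) : Abelianization.of (sec q) = q :=
  (QuotientGroup.mk_surjective q).choose_spec

/-- Schreier-type elements. -/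
noncomputable def dK (q : MT r) (w : FreeGroup (Fin r)) : commutator (FreeGroup (Fin r)) :=
  ⟨sec q * w * (sec (q * Abelianization.of w))⁻¹, by
    rw [← QuotientGroup.eq_one_iff]
    change Abelianization.of _ = 1
    simp [sec_spec]⟩

/-- Their classes in the abelianized derived subgroup. -/
noncomputable def dd (q : MT r) (w : FreeGroup (Fin r)) :
    Additive (Abelianization (commutator (FreeGroup (Fin r)))) :=
  Additive.ofMul (Abelianization.of (dK q w))

theorem dd_mul (q : MT r) (w v : FreeGroup (Fin r)) :
    dd q (w * v) = dd q w + dd (q * Abelianization.of w) v := by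
  unfold dd
  rw [← ofMul_mul, ← map_mul]
  congr 2
  apply Subtype.ext
  simp [dK, mul_assoc]

theorem dd_one (q : MT r) : dd q 1 = 0 := by
  have := dd_mul q 1 1
  simpa using this

/-- The linear map recovering the class from the flow. -/
noncomputable def rho (r : ℕ) : (MT r →₀ (Fin r → ℤ)) →+
    Additive (Abelianization (commutator (FreeGroup (Fin r)))) :=
  Finsupp.liftAddHom fun q =>
    { toFun := fun v => ∑ i, v i • dd q (FreeGroup.of i)
      map_zero' := by simp
      map_add' := by intro x y; simp [add_smul, Finset.sum_add_distrib] }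

theorem rho_single (q : MT r) (i : Fin r) :
    rho r (Finsupp.single q (Pi.single i 1)) = dd q (FreeGroup.of i) := by
  unfold rho
  rw [Finsupp.liftAddHom_apply_single]
  change ∑ k, (Pi.single i 1 : Fin r → ℤ) k • dd q (FreeGroup.of k) = _
  rw [Finset.sum_eq_single i]
  · simp
  · intro k _ hk; simp [Pi.single_eq_of_ne hk]
  · simp

theorem rho_flow (w : FreeGroup (Fin r)) : ∀ q, rho r (wreathShift q (flow w)) = dd q w := by
  have hof : ∀ (i : Fin r) q, rho r (wreathShift q (flow (FreeGroup.of i))) =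
      dd q (FreeGroup.of i) := by
    intro i q
    rw [flow_of]
    have : wreathShift q (Finsupp.single (1 : MT r) (Pi.single i 1 : Fin r → ℤ)) =
        Finsupp.single q (Pi.single i 1) := by simp [wreathShift]
    rw [this, rho_single]
  induction w using FreeGroup.induction_on with
  | C1 => intro q; rw [flow_one, map_zero, map_zero, dd_one]
  | of i => exact hof i
  | inv_of i _ =>
    intro q
    have h1 := dd_mul q (FreeGroup.of i)⁻¹ (FreeGroup.of i)
    have h2 := congrArg (fun f => rho r (wreathShift q f))
      (flow_mul (FreeGroup.of i)⁻¹ (FreeGroup.of i))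
    simp only [map_add, ← shift_mul] at h2
    rw [inv_mul_cancel, flow_one, map_zero, map_zero, hof] at h2
    rw [inv_mul_cancel, dd_one, h2] at h1
    exact add_right_cancel h1
  | mul x y hx hy =>
    intro q
    rw [flow_mul, map_add, map_add, hx, ← shift_mul, hy, dd_mul]

theorem derived_two (G : Type*) [Group G] :
    derivedSeries G 2 = ⁅commutator G, commutator G⁆ := by
  rw [derivedSeries_succ, derivedSeries_one]

theorem mag_ker : (mag r).ker = derivedSeries (FreeGroup (Fin r)) 2 := by
  apply le_antisymm
  · intro w hw
    rw [MonoidHom.mem_ker] at hw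
    have h1 : Abelianization.of w = 1 := by rw [← mag_right, hw]; rfl
    have h2 : flow w = 0 := by unfold flow; rw [hw]; rfl
    have h3 := rho_flow w 1
    rw [h2, map_zero, map_zero] at h3
    have h4 : Abelianization.of (dK 1 w) = 1 := Additive.ofMul.injective h3.symm
    have h5 : dK 1 w ∈ commutator (commutator (FreeGroup (Fin r))) :=
      (QuotientGroup.eq_one_iff _).1 h4
    have h6 : (dK 1 w : FreeGroup (Fin r)) ∈ derivedSeries (FreeGroup (Fin r)) 2 := by
      have h7 : (commutator (FreeGroup (Fin r))).subtype (dK 1 w) ∈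
        Subgroup.map (commutator (FreeGroup (Fin r))).subtype
          (commutator (commutator (FreeGroup (Fin r)))) := ⟨_, h5, rfl⟩
      rw [commutator_def (commutator (FreeGroup (Fin r))), Subgroup.map_commutator] at h7
      rw [derived_two]
      refine Subgroup.commutator_mono ?_ ?_ h7 <;>
      · rintro _ ⟨x, -, rfl⟩
        exact x.2
    have h8 : (dK 1 w : FreeGroup (Fin r)) = sec 1 * w * (sec 1)⁻¹ := by
      simp [dK, h1]
    rw [h8] at h6
    have h9 := (derivedSeries_normal (FreeGroup (Fin r)) 2).conj_mem _ h6 (sec (1 : MT r))⁻¹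
    simpa [mul_assoc] using h9
  · rw [derived_two, Subgroup.commutator_le]
    intro x hx y hy
    have key : ∀ x ∈ commutator (FreeGroup (Fin r)),
        mag r x ∈ commutator (WreathProduct (Fin r → ℤ) (MT r)) := by
      intro x hx
      have h1 := Subgroup.map_commutator (⊤ : Subgroup (FreeGroup (Fin r))) ⊤ (mag r)
      have h2 : mag r x ∈ Subgroup.map (mag r) (commutator _) := ⟨x, hx, rfl⟩
      rw [commutator_def, h1] at h2
      exact Subgroup.commutator_mono le_top le_top h2
    rw [MonoidHom.mem_ker, map_commutatorElement, commutatorElement_eq_one_iff_mul_comm]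
    exact metab_semidirect _ _ _ (key x hx) (key y hy)

theorem magnus (r : ℕ) : ∃ f : FreeMetabelian (Fin r) →* WreathProduct (Fin r → ℤ) (MT r),
    Function.Injective f := by
  refine ⟨QuotientGroup.lift _ (mag r) (by intro w hw; rw [← mag_ker] at hw; exact hw), ?_⟩
  rw [injective_iff_map_eq_one]
  intro x
  obtain ⟨w, rfl⟩ := QuotientGroup.mk_surjective x
  intro h
  rw [QuotientGroup.eq_one_iff, ← mag_ker]
  exact h

end Magnus

theorem final : (∀ r : ℕ,
      ∃ (X : Type) (_ : Finite X) (S : Set (FreeGroup X)) (δ : ℕ → ℕ),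
        S.Finite ∧
        IsMetabelian (FreeGroup X ⧸ Subgroup.normalClosure S) ∧
        IsDehnFunctionOf S δ ∧ DehnEquiv δ (fun n => 2 ^ n) ∧
        ∃ ι : FreeMetabelian (Fin r) →* FreeGroup X ⧸ Subgroup.normalClosure S,
          Function.Injective ι) := by
  intro r
  obtain ⟨f, hf⟩ := magnus r
  have hfg : Group.FG (MT r) := by
    have : Group.FG (FreeGroup (Fin r)) := inferInstance
    exact QuotientGroup.fg _
  obtain ⟨X, hX, S, δ, h1, h2, h3, h4, ι, hι⟩ := part_one (Fin r → ℤ) (MT r) inferInstance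
    inferInstance r ⟨AddEquiv.refl _⟩ hfg
  exact ⟨X, hX, S, δ, h1, h2, h3, h4, ι.comp f, hι.comp hf⟩

/-- Every wreath product of a free abelian group of finite rank with a
finitely generated abelian group embeds into a finitely presented metabelian group with
Dehn function equivalent to `2ⁿ`; in particular so does every free metabelian group of
finite rank. -/
theorem wreath_embeds_exponential_dehn :
    (∀ (A T : Type) (_ : AddCommGroup A) (_ : CommGroup T) (r : ℕ),
      Nonempty (A ≃+ (Fin r → ℤ)) → Group.FG T →
      ∃ (X : Type) (_ : Finite X) (S : Set (FreeGroup X)) (δ : ℕ → ℕ),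
        S.Finite ∧
        IsMetabelian (FreeGroup X ⧸ Subgroup.normalClosure S) ∧
        IsDehnFunctionOf S δ ∧ DehnEquiv δ (fun n => 2 ^ n) ∧
        ∃ ι : WreathProduct A T →* FreeGroup X ⧸ Subgroup.normalClosure S,
          Function.Injective ι) ∧
    (∀ r : ℕ,
      ∃ (X : Type) (_ : Finite X) (S : Set (FreeGroup X)) (δ : ℕ → ℕ),
        S.Finite ∧
        IsMetabelian (FreeGroup X ⧸ Subgroup.normalClosure S) ∧
        IsDehnFunctionOf S δ ∧ DehnEquiv δ (fun n => 2 ^ n) ∧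
        ∃ ι : FreeMetabelian (Fin r) →* FreeGroup X ⧸ Subgroup.normalClosure S,
          Function.Injective ι) := by
  exact ⟨part_one, final⟩
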